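/- arXiv:1207.1481 — 2 statements merged into one kernel-verified Lean document; each statement's English description precedes it below -/
import Mathlib

section
/- Let f be an orientation-preserving C^1 diffeomorphism of the circle ℝ/ℤ whose derivative Df has bounded variation (equivalently, log Df has bounded variation), and suppose the rotation number of f is irrational. Let μ denote the unique f-invariant Borel probability measure on the circle. Then every f-invariant 1-distribution is a scalar multiple of integration against μ; that is, if L is a continuous linear functional on the space of C^1 real-valued functions on the circle satisfying L(u ∘ f) = L(u) for all C^1 functions u, then there exists a real constant c such that L(u) = c ∫ u dμ for every C^1 function u. -/
/-! Let `F` be the lift of `f`. Subtracting `L(1) · μ` from `L`, it suffices to show that an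
invariant distribution `L` that kills constants is zero (`eq_zero_of_apply_one`). Such an `L` is
determined by `Λ = L ∘ prim`, where `prim φ` is the primitive of `φ - ∫ φ`; this is a bounded
functional on continuous functions with `Λ 1 = 0`. Invariance of `L` says that
`Λ(Tφ) = Λ φ + a ∫ φ`, where `Tφ = (φ ∘ f) · Df` is the action on densities and `a = Λ(Df)`.
Hence `Λ(D(f^n)) = n a`, and since `D(f^n)` is bounded along a sequence of times by the Denjoy
inequality (`denjoy_inequality`), `a = 0`.

So `Λ` is invariant under the positive operator `T`. Its positive and negative parts are represented
by finite measures `ν` which satisfy `ν ≤ f_*(Df · ν)` (`isSub_posMeasure`). For such a measure,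
`ν(f^k I) ≤ C D(f^k)(x) ν(I)` for the iterates of a fundamental interval `I` starting at `x`, by
bounded distortion. Those iterates cover the circle while `∑ D(f^k)(x) |I|` is bounded, so
`ν(circle) |I| ≤ C' ν(I)` with `C'` independent of `I` (`IsSub.mul_le_fundamental`). By Denjoy's
theorem the fundamental intervals are arbitrarily short, whence `ν` dominates the Lebesgue measure
times `ν(circle) / C'` (`IsSub.smul_volume_le`). Lebesgue measure itself satisfies
`Leb = f_*(Df · Leb)`, so this applies again after subtracting from `ν` its largest multiple of
Lebesgue measure, and shows that nothing is left (`IsSub.eq_smul_volume`). Both parts of `Λ` are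
thus multiples of Lebesgue measure, with equal masses because `Λ 1 = 0`, and `Λ = 0`.

Continued fractions are avoided: consecutive denominators of convergents of the rotation number are
replaced by a pair of record coefficients `b`, `c` of opposite signs (`GoodPair`), and `[x, F^b x + jb)`
is the corresponding fundamental interval. -/


open MeasureTheory Function Filter Set
open scoped Topology

noncomputable section

/-- The circle `ℝ/ℤ`. -/
abbrev 𝕊 : Type := UnitAddCircle

/-- An orientation-preserving `C¹` diffeomorphism of the circle `ℝ/ℤ`, described by a lift
`F : ℝ → ℝ` (a `C¹` map commuting with the unit translation, with everywhere positive
derivative, admitting a `C¹` inverse). -/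
structure C1Diffeo : Type where
  F : ℝ → ℝ
  Finv : ℝ → ℝ
  contDiff : ContDiff ℝ 1 F
  contDiff_inv : ContDiff ℝ 1 Finv
  deriv_pos : ∀ x, 0 < deriv F x
  map_add_one : ∀ x, F (x + 1) = F x + 1
  left_inv : Function.LeftInverse Finv F
  right_inv : Function.RightInverse Finv F

/-- If a map `ℝ → ℝ` commutes with the unit translation, so do its iterates. -/
lemma iterate_map_add_one {G : ℝ → ℝ} (h : ∀ x, G (x + 1) = G x + 1) (n : ℕ) (x : ℝ) :
    G^[n] (x + 1) = G^[n] x + 1 := by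
  induction n with
  | zero => simp
  | succ n ih => rw [Function.iterate_succ_apply', Function.iterate_succ_apply', ih, h]

/-- The derivative of a periodic function is periodic. -/
lemma Function.Periodic.deriv' {G : ℝ → ℝ} (h : Function.Periodic G 1) :
    Function.Periodic (deriv G) 1 := by
  intro x
  have h2 : (fun y => G (y + 1)) = G := funext h
  have h3 := congrArg (fun k : ℝ → ℝ => deriv k x) h2
  simpa [deriv_comp_add_const] using h3

/-- The derivative of a map commuting with the unit translation is periodic. -/
lemma periodic_deriv_of_shift {G : ℝ → ℝ} (h : ∀ x, G (x + 1) = G x + 1) :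
    Function.Periodic (deriv G) 1 := by
  intro x
  have h2 : (fun y => G (y + 1)) = fun y => G y + 1 := funext h
  have h3 := congrArg (fun k : ℝ → ℝ => deriv k x) h2
  simpa [deriv_comp_add_const, deriv_add_const] using h3

namespace C1Diffeo

variable (f : C1Diffeo)

lemma inv_map_add_one : ∀ x, f.Finv (x + 1) = f.Finv x + 1 := fun x => by
  conv_lhs => rw [← f.right_inv x]
  rw [← f.map_add_one, f.left_inv]

/-- Lift of the `n`-th iterate of `f`, `n : ℤ`. -/
def iterZ : ℤ → ℝ → ℝ
  | Int.ofNat n => f.F^[n]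
  | Int.negSucc n => f.Finv^[n + 1]

lemma iterZ_map_add_one (n : ℤ) (x : ℝ) : f.iterZ n (x + 1) = f.iterZ n x + 1 := by
  cases n with
  | ofNat n => exact iterate_map_add_one f.map_add_one n x
  | negSucc n => exact iterate_map_add_one f.inv_map_add_one (n + 1) x

/-- The induced self-map of the circle. -/
def toCircle : 𝕊 → 𝕊 :=
  Function.Periodic.lift (f := fun x : ℝ => ((f.F x : ℝ) : 𝕊)) (fun x => by
    show ((f.F (x + 1) : ℝ) : 𝕊) = ((f.F x : ℝ) : 𝕊)
    rw [f.map_add_one]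
    exact AddCircle.coe_add_period 1 (f.F x))

/-- The `n`-th iterate (`n : ℤ`) of the induced self-map of the circle. -/
def mapZ (n : ℤ) : 𝕊 → 𝕊 :=
  Function.Periodic.lift (f := fun x : ℝ => ((f.iterZ n x : ℝ) : 𝕊)) (fun x => by
    show ((f.iterZ n (x + 1) : ℝ) : 𝕊) = ((f.iterZ n x : ℝ) : 𝕊)
    rw [f.iterZ_map_add_one]
    exact AddCircle.coe_add_period 1 (f.iterZ n x))

/-- The derivative `Df`, as a function on the circle. -/
def Df : 𝕊 → ℝ := (periodic_deriv_of_shift f.map_add_one).lift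

/-- The derivative `D(fⁿ)` of the `n`-th iterate (`n : ℕ`), as a function on the circle. -/
def DfIter (n : ℕ) : 𝕊 → ℝ :=
  (periodic_deriv_of_shift (iterate_map_add_one f.map_add_one n)).lift

/-- The derivative `D(fⁿ)` of the `n`-th iterate (`n : ℤ`), as a function on the circle. -/
def DfZ (n : ℤ) : 𝕊 → ℝ := (periodic_deriv_of_shift (f.iterZ_map_add_one n)).lift

/-- The lift, as a degree one monotone map of the real line. -/
def deg1 : CircleDeg1Lift :=
  ⟨⟨f.F, (strictMono_of_deriv_pos f.deriv_pos).monotone⟩, f.map_add_one⟩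

/-- The rotation number of `f` (the translation number of the given lift). -/
def rot : ℝ := f.deg1.translationNumber

end C1Diffeo

/-- The lift to `ℝ` of a function on the circle. -/
def lft (u : 𝕊 → ℝ) : ℝ → ℝ := fun x => u ↑x

lemma lft_periodic (u : 𝕊 → ℝ) : Function.Periodic (lft u) 1 := fun x => by
  simp only [lft]
  rw [AddCircle.coe_add_period]

/-- A function on the circle is `C¹` if its lift to `ℝ` is `C¹`. -/
def IsC1 (u : 𝕊 → ℝ) : Prop := ContDiff ℝ 1 (lft u)

/-- The derivative of a function on the circle (the descent of the derivative
of its lift). -/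
def derivS (u : 𝕊 → ℝ) : 𝕊 → ℝ := ((lft_periodic u).deriv').lift

/-- The `C¹` norm of a function on the circle. -/
def c1Norm (u : 𝕊 → ℝ) : ℝ := (⨆ x : 𝕊, |u x|) + ⨆ x : 𝕊, |derivS u x|

/-- The space of `C¹` real functions on the circle, as a subspace of all functions. -/
def C1Sub : Submodule ℝ (𝕊 → ℝ) where
  carrier := {u | IsC1 u}
  add_mem' := fun hu hv => by
    simp only [Set.mem_setOf_eq, IsC1] at *
    exact hu.add hv
  zero_mem' := by
    simp only [Set.mem_setOf_eq, IsC1]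
    exact contDiff_const
  smul_mem' := fun c u hu => by
    simp only [Set.mem_setOf_eq, IsC1] at *
    exact hu.const_smul c

/-- A (continuous) `1`-distribution on the circle: a linear functional on the space of `C¹`
functions which is bounded with respect to the `C¹` norm. -/
def IsDistribution (L : C1Sub →ₗ[ℝ] ℝ) : Prop :=
  ∃ C : ℝ, ∀ u : C1Sub, |L u| ≤ C * c1Norm (u : 𝕊 → ℝ)

/-- Invariance of a `1`-distribution under a circle diffeomorphism: `L (u ∘ f) = L u`. -/
def InvariantUnder (f : C1Diffeo) (L : C1Sub →ₗ[ℝ] ℝ) : Prop :=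
  ∀ u v : C1Sub, (∀ x, (v : 𝕊 → ℝ) x = (u : 𝕊 → ℝ) (f.toCircle x)) → L v = L u

/-- `K` is a minimal invariant Cantor set for the circle diffeomorphism `f`: a nonempty
perfect totally disconnected invariant set in which every (full) orbit is dense. -/
def IsMinimalInvariantCantor (f : C1Diffeo) (K : Set 𝕊) : Prop :=
  K.Nonempty ∧ Perfect K ∧ IsTotallyDisconnected K ∧
    f.toCircle '' K = K ∧
    ∀ x ∈ K, closure (Set.range fun n : ℤ => f.mapZ n x) = K

/-- The total mass `S = Σ_{n ∈ ℤ} D(fⁿ)(x₀)` of the derivatives along the orbit of `x₀`. -/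
def orbitSum (f : C1Diffeo) (x₀ : 𝕊) : ℝ := ∑' n : ℤ, f.DfZ n x₀

/-- The atomic measure `ν = S⁻¹ Σ_{n ∈ ℤ} D(fⁿ)(x₀) · δ_{fⁿ(x₀)}` on the circle. -/
def orbitMeasure (f : C1Diffeo) (x₀ : 𝕊) : Measure 𝕊 :=
  (ENNReal.ofReal (orbitSum f x₀))⁻¹ •
    Measure.sum fun n : ℤ => ENNReal.ofReal (f.DfZ n x₀) • Measure.dirac (f.mapZ n x₀)

/-! ### Arithmetic of `ℤ + αℤ` -/

/-- `b α + jb` and `c α + jc` are consecutive records in the search for small positive elements of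
`ℤ + αℤ`: the second is smaller, `b` and `c` have opposite signs, and no element with coefficient
smaller than `|c|` lies strictly between `0` and the first one. This replaces consecutive
denominators `q_n = |b|`, `q_{n+1} = |c|` of continued fraction convergents. -/
structure GoodPair (α : ℝ) (b jb c jc : ℤ) : Prop where
  b_pos : 0 < b * α + jb
  c_pos : 0 < c * α + jc
  c_lt_b : c * α + jc < b * α + jb
  sign : (0 < b ∧ c < 0) ∨ (b < 0 ∧ 0 < c)
  b_le_c : |b| ≤ |c|
  gap : ∀ k j : ℤ, |k| < |c| → 0 < k * α + j → b * α + jb ≤ k * α + j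

lemma exists_small_pos {α : ℝ} (hα : Irrational α) {η : ℝ} (hη : 0 < η) :
    ∃ k j : ℤ, 0 < k * α + j ∧ k * α + j < η := by
  obtain ⟨n, hn⟩ := exists_nat_one_div_lt hη
  obtain ⟨j, k, hk, -, hjk⟩ := Real.exists_int_int_abs_mul_sub_le α (Nat.succ_pos n)
  have hlt : |k * α - j| < η := by
    refine lt_of_le_of_lt hjk (lt_of_le_of_lt ?_ hn)
    push_cast
    apply one_div_le_one_div_of_le <;> linarith [(n.cast_nonneg : (0:ℝ) ≤ n)]
  have hne : (k : ℝ) * α - j ≠ 0 :=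
    ((hα.intCast_mul hk.ne').sub_intCast j).ne_zero
  rcases lt_or_gt_of_ne hne with h | h
  · refine ⟨-k, j, ?_, ?_⟩ <;> push_cast <;> rw [abs_of_neg h] at hlt <;> linarith
  · refine ⟨k, -j, ?_, ?_⟩ <;> push_cast <;> rw [abs_of_pos h] at hlt <;> linarith

/-- A positive element of `ℤ + αℤ` below `η` whose coefficient is smallest possible. -/
lemma exists_min_coeff {α : ℝ} (hα : Irrational α) {η : ℝ} (hη : 0 < η) :
    ∃ k j : ℤ, 0 < k * α + j ∧ k * α + j < η ∧
      ∀ l i : ℤ, |l| < |k| → 0 < l * α + i → η ≤ l * α + i := by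
  have hex : ∃ n : ℕ, ∃ k j : ℤ, k.natAbs = n ∧ 0 < k * α + j ∧ k * α + j < η := by
    obtain ⟨k, j, h⟩ := exists_small_pos hα hη
    exact ⟨_, k, j, rfl, h⟩
  classical
  obtain ⟨k, j, hk, h1, h2⟩ := Nat.find_spec hex
  refine ⟨k, j, h1, h2, fun l i hl hpos => ?_⟩
  by_contra! hlt
  have := Nat.find_min hex (m := l.natAbs) (by rw [← hk]; zify; exact hl)
  exact this ⟨l, i, rfl, hpos, hlt⟩

lemma exists_goodPair {α : ℝ} (hα : Irrational α) {η : ℝ} (hη : 0 < η) :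
    ∃ b jb c jc : ℤ, GoodPair α b jb c jc ∧ b * α + jb < η := by
  have hη' : 0 < min η 1 := lt_min hη one_pos
  obtain ⟨b, jb, hb0, hb1, hb2⟩ := exists_min_coeff hα hη'
  obtain ⟨c, jc, hc0, hc1, hc2⟩ := exists_min_coeff hα hb0
  have hle : |b| ≤ |c| := by
    by_contra! h
    linarith [hb2 c jc h hc0]
  have hbne : b ≠ 0 := by
    rintro rfl
    have h1 := hb1.trans_le (min_le_right _ _)
    simp only [Int.cast_zero, zero_mul, zero_add] at hb0 h1
    norm_cast at hb0 h1
    omega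
  have hsign : (0 < b ∧ c < 0) ∨ (b < 0 ∧ 0 < c) := by
    by_contra! h
    have habs : |b - c| < |c| := by grind
    have := hc2 (b - c) (jb - jc) habs (by push_cast; linarith)
    push_cast at this
    linarith
  exact ⟨b, jb, c, jc, ⟨hb0, hc0, hc1, hsign, hle, hc2⟩, hb1.trans_le (min_le_left _ _)⟩

lemma exists_gap {α : ℝ} (hα : Irrational α) (B : ℤ) (hB : 0 ≤ B) :
    ∃ η : ℝ, 0 < η ∧ ∀ k j : ℤ, |k| ≤ B → 0 < k * α + j → η ≤ k * α + j := by
  -- the smallest positive element with coefficient `k ≠ 0` is the fractional part of `k α`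
  let g : ℤ → ℝ := fun k => if k = 0 then 1 else Int.fract (k * α)
  obtain ⟨m, -, hm⟩ := Finset.exists_min_image (Finset.Icc (-B) B) g ⟨0, by simp [hB]⟩
  refine ⟨g m, ?_, fun k j hk hpos => (hm k (by simpa using abs_le.1 hk)).trans ?_⟩
  · by_cases h0 : m = 0
    · simp [g, h0]
    · simp only [g, h0, if_false]
      exact Int.fract_pos.2 fun h => (hα.intCast_mul h0).ne_int _ h
  · by_cases h0 : k = 0
    · subst h0
      simp only [Int.cast_zero, zero_mul, zero_add, g, if_true] at hpos ⊢
      exact_mod_cast Int.cast_pos.1 hpos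
    · simp only [g, h0, if_false]
      have h1 := Int.floor_add_fract ((k : ℝ) * α)
      have h2 := Int.fract_lt_one ((k : ℝ) * α)
      have h3 : (-1 : ℝ) < ⌊(k : ℝ) * α⌋ + j := by linarith
      have h4 : 0 ≤ ⌊(k : ℝ) * α⌋ + j := by
        have : (-1 : ℤ) < ⌊(k : ℝ) * α⌋ + j := by exact_mod_cast h3
        omega
      have h5 : (0 : ℝ) ≤ ⌊(k : ℝ) * α⌋ + j := by exact_mod_cast h4
      linarith

/-- Good pairs exist with `|b|` as large and `b α + jb` as small as desired. -/
lemma exists_goodPair_large {α : ℝ} (hα : Irrational α) {η : ℝ} (hη : 0 < η) (B : ℤ)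
    (hB : 0 ≤ B) :
    ∃ b jb c jc : ℤ, GoodPair α b jb c jc ∧ b * α + jb < η ∧ B < |b| := by
  obtain ⟨η', h0, h1⟩ := exists_gap hα B hB
  obtain ⟨b, jb, c, jc, h, hb⟩ := exists_goodPair hα (lt_min hη h0)
  refine ⟨b, jb, c, jc, h, hb.trans_le (min_le_left _ _), ?_⟩
  by_contra! hle
  linarith [h1 b jb hle h.b_pos, min_le_right η η']

/-! ### The action of `ℤ × ℤ` on the line -/

namespace C1Diffeo

variable (f : C1Diffeo)

/-- The lift `F` as a permutation of `ℝ`. -/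
def perm : Equiv.Perm ℝ := ⟨f.F, f.Finv, f.left_inv, f.right_inv⟩

/-- The `k`-th iterate of the lift, `k ∈ ℤ`, defined through the group of permutations of `ℝ` so
that the laws of exponents are available. -/
def act (k : ℤ) (x : ℝ) : ℝ := (f.perm ^ k) x

lemma act_zero (x : ℝ) : f.act 0 x = x := rfl

lemma act_one (x : ℝ) : f.act 1 x = f.F x := by simp [act, perm]

lemma act_add (k l : ℤ) (x : ℝ) : f.act (k + l) x = f.act k (f.act l x) := by
  simp [act, zpow_add]

lemma act_natCast (n : ℕ) (x : ℝ) : f.act n x = f.F^[n] x := by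
  simp [act, ← Equiv.Perm.iterate_eq_pow, perm]

lemma act_neg_act (k : ℤ) (x : ℝ) : f.act (-k) (f.act k x) = x := by
  rw [← act_add, neg_add_cancel, act_zero]

lemma act_act_neg (k : ℤ) (x : ℝ) : f.act k (f.act (-k) x) = x := by
  rw [← act_add, add_neg_cancel, act_zero]

lemma strictMono_F : StrictMono f.F := strictMono_of_deriv_pos f.deriv_pos

lemma F_add_int (x : ℝ) (j : ℤ) : f.F (x + j) = f.F x + j := f.deg1.map_add_int x j

lemma act_natCast_add_int (n : ℕ) (x : ℝ) (j : ℤ) : f.act n (x + j) = f.act n x + j := by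
  induction n with
  | zero => rfl
  | succ n ih =>
    have h : ((n + 1 : ℕ) : ℤ) = 1 + n := by push_cast; ring
    rw [h, act_add, act_add, ih, act_one, act_one, F_add_int]

lemma strictMono_act_natCast (n : ℕ) : StrictMono (f.act n) := by
  have : f.act n = f.F^[n] := funext (f.act_natCast n)
  rw [this]
  exact f.strictMono_F.iterate n

lemma act_add_int (k : ℤ) (x : ℝ) (j : ℤ) : f.act k (x + j) = f.act k x + j := by
  obtain ⟨n, rfl | rfl⟩ := k.eq_nat_or_neg
  · exact f.act_natCast_add_int n x j
  · apply (f.strictMono_act_natCast n).injective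
    rw [act_act_neg, act_natCast_add_int, act_act_neg]

lemma strictMono_act (k : ℤ) : StrictMono (f.act k) := by
  obtain ⟨n, rfl | rfl⟩ := k.eq_nat_or_neg
  · exact f.strictMono_act_natCast n
  · intro x y hxy
    rw [← (f.strictMono_act_natCast n).lt_iff_lt]
    simpa [act_act_neg] using hxy

lemma continuous_act_natCast (n : ℕ) : Continuous (f.act n) := by
  have : f.act n = f.F^[n] := funext (f.act_natCast n)
  rw [this]
  exact f.contDiff.continuous.iterate n

lemma iterate_deg1 (n : ℕ) : ⇑(f.deg1 ^ n) = f.F^[n] := by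
  rw [CircleDeg1Lift.coe_pow]; rfl

/-- The translation number decides on which side of `x` the point `F^k x + j` lies. -/
lemma lt_act {k j : ℤ} (h : 0 < k * f.rot + j) (x : ℝ) : x < f.act k x + j := by
  have htr : ∀ n : ℕ, (f.deg1 ^ n).translationNumber = n * f.rot := fun n =>
    CircleDeg1Lift.translationNumber_pow _ n
  obtain ⟨n, rfl | rfl⟩ := k.eq_nat_or_neg
  · have := CircleDeg1Lift.lt_map_of_int_lt_translationNumber (f := f.deg1 ^ n) (n := -j)
      (by rw [htr]; push_cast at h ⊢; linarith) x
    rw [iterate_deg1, ← act_natCast] at this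
    push_cast at this
    linarith
  · have := CircleDeg1Lift.map_lt_of_translationNumber_lt_int (f := f.deg1 ^ n) (n := j)
      (by rw [htr]; push_cast at h ⊢; linarith) (f.act (-n) x)
    rwa [iterate_deg1, ← act_natCast, act_act_neg] at this

lemma act_lt_act {k i l j : ℤ} (h : k * f.rot + i < l * f.rot + j) (x : ℝ) :
    f.act k x + i < f.act l x + j := by
  have := f.lt_act (k := l - k) (j := j - i) (by push_cast; linarith) (f.act k x)
  rw [← act_add, sub_add_cancel] at this
  push_cast at this
  linarith

end C1Diffeo

/-! ### Packing of intervals modulo `1` -/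

lemma packing_line {G : ℝ → ℝ} (hG : Monotone G) {ι : Type*} (A : Finset ι)
    (s t : ι → ℝ) (hst : ∀ k ∈ A, s k < t k)
    (hdis : ∀ k ∈ A, ∀ l ∈ A, k ≠ l → t k ≤ s l ∨ t l ≤ s k) (a : ℝ) (u : ℝ) (hau : a ≤ u)
    (ha : ∀ k ∈ A, a ≤ s k) (hu : ∀ k ∈ A, t k ≤ u) :
    ∑ k ∈ A, (G (t k) - G (s k)) ≤ G u - G a := by
  classical
  induction A using Finset.induction_on_max_value s generalizing u with
  | empty => simpa using hG hau
  | insert m A hm hmax ih =>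
    rw [Finset.sum_insert hm]
    have h1 := ih (fun k hk => hst k (Finset.mem_insert_of_mem hk))
      (fun k hk l hl => hdis k (Finset.mem_insert_of_mem hk) l (Finset.mem_insert_of_mem hl))
      (s m) (ha m (Finset.mem_insert_self _ _))
      (fun k hk => ha k (Finset.mem_insert_of_mem hk))
      (fun k hk => by
        have hkm : k ≠ m := fun h => hm (h ▸ hk)
        rcases hdis k (Finset.mem_insert_of_mem hk) m (Finset.mem_insert_self _ _) hkm with h | h
        · exact h
        · have := hmax k hk
          have := hst m (Finset.mem_insert_self _ _)
          linarith)
    have h2 := hG (hu m (Finset.mem_insert_self _ _))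
    linarith

/-- Intervals whose images in the circle are pairwise disjoint have total `G`-length at most the
increase of `G` over one period. It is used both for lengths and for variations. -/
lemma packing {G : ℝ → ℝ} (hG : Monotone G) {C : ℝ} (hG1 : ∀ x, G (x + 1) = G x + C) {ι : Type*}
    (A : Finset ι) (s t : ι → ℝ) (hst : ∀ k ∈ A, s k < t k)
    (hdis : ∀ k ∈ A, ∀ l ∈ A, ∀ j : ℤ, (k ≠ l ∨ j ≠ 0) → t k + j ≤ s l ∨ t l ≤ s k + j) :
    ∑ k ∈ A, (G (t k) - G (s k)) ≤ C := by
  rcases A.eq_empty_or_nonempty with rfl | ⟨m, hm⟩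
  · have := hG (zero_le_one (α := ℝ))
    have h1 := hG1 0
    simp only [zero_add] at h1
    simp only [Finset.sum_empty]
    linarith
  have hper : ∀ (j : ℤ) (x : ℝ), G (x + j) = G x + j * C := by
    intro j
    induction j using Int.induction_on with
    | zero => simp
    | succ n ih =>
      intro x
      have := hG1 (x + n)
      have := ih x
      push_cast at this ⊢
      rw [← add_assoc]
      linarith
    | pred n ih =>
      intro x
      have h1 := hG1 (x + (-n - 1))
      have h2 := ih x
      push_cast at h2 ⊢
      rw [show x + (-(n : ℝ) - 1) + 1 = x + -n by ring] at h1
      linarith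
  -- translate all intervals so that they start in `[s m, s m + 1)`
  let j : ι → ℤ := fun k => -⌊s k - s m⌋
  have hlo : ∀ k, s m ≤ s k + j k := fun k => by
    have := Int.floor_le (s k - s m)
    simp only [j]; push_cast; linarith
  have hhi : ∀ k, s k + j k < s m + 1 := fun k => by
    have := Int.lt_floor_add_one (s k - s m)
    simp only [j]; push_cast; linarith
  have key := packing_line hG A (fun k => s k + j k) (fun k => t k + j k)
    (fun k hk => by simpa using hst k hk)
    (fun k hk l hl hkl => by
      have := hdis k hk l hl (j k - j l) (Or.inl hkl)
      push_cast at this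
      rcases this with h | h
      · left; linarith
      · right; linarith)
    (s m) (s m + 1) (by linarith) (fun k _ => hlo k)
    (fun k hk => by
      have h := hdis k hk m hm (j k - 1) (by
        by_cases hkm : k = m
        · right; subst hkm; simp [j]
        · left; exact hkm)
      push_cast at h
      have := hst m hm
      have := hhi k
      rcases h with h | h <;> linarith)
  rw [hG1] at key
  simp only [hper] at key
  refine (Finset.sum_le_sum fun k _ => ?_).trans (key.trans (by linarith))
  linarith

/-! ### Distortion -/

/-- A one-sided substitute for the variation function of `log F'`: `v` increases by `V` over each
period and its increments dominate those of `log F'`. -/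
structure IsVarBound (f : C1Diffeo) (v : ℝ → ℝ) (V : ℝ) : Prop where
  bound : ∀ x y, x ≤ y →
    |Real.log (deriv f.F y) - Real.log (deriv f.F x)| ≤ v y - v x
  add_one : ∀ x, v (x + 1) = v x + V

namespace IsVarBound

variable {f : C1Diffeo} {v : ℝ → ℝ} {V : ℝ}

lemma monotone (h : IsVarBound f v V) : Monotone v := fun x y hxy => by
  linarith [h.bound x y hxy, abs_nonneg (Real.log (deriv f.F y) - Real.log (deriv f.F x))]

lemma nonneg (h : IsVarBound f v V) : 0 ≤ V := by
  linarith [h.add_one 0, h.monotone (show (0 : ℝ) ≤ 0 + 1 by norm_num)]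

end IsVarBound

lemma exists_isVarBound (f : C1Diffeo) (hbv : BoundedVariationOn (deriv f.F) (Set.Icc 0 1)) :
    ∃ v V, IsVarBound f v V := by
  have hper := periodic_deriv_of_shift f.map_add_one
  have hcont : Continuous (deriv f.F) := f.contDiff.continuous_deriv le_rfl
  obtain ⟨m, hm, hmin⟩ := isCompact_Icc.exists_isMinOn (nonempty_Icc.2 zero_le_one)
    (hcont.continuousOn (s := Icc (0:ℝ) 1))
  have hmpos := f.deriv_pos m
  set ψ : ℝ → ℝ := fun x => Real.log (deriv f.F x) with hψ
  have hψbv : BoundedVariationOn ψ (Icc 0 1) := by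
    have hlip : LipschitzOnWith (Real.toNNReal (deriv f.F m)⁻¹) Real.log (Ici (deriv f.F m)) := by
      refine (convex_Ici _).lipschitzOnWith_of_nnnorm_deriv_le
        (fun x hx => Real.differentiableAt_log (hmpos.trans_le hx).ne') fun x hx => ?_
      have hx0 : 0 < x := hmpos.trans_le hx
      rw [Real.deriv_log, ← NNReal.coe_le_coe, coe_nnnorm, Real.norm_of_nonneg (by positivity),
        Real.coe_toNNReal _ (by positivity)]
      exact inv_anti₀ hmpos hx
    exact hlip.comp_boundedVariationOn (fun x hx => hmin hx) hbv
  have hψloc := hψbv.locallyBoundedVariationOn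
  have hψper : ∀ x, ψ (Int.fract x) = ψ x := fun x => by
    have := hper.sub_int_mul_eq (x := x) ⌊x⌋
    simp only [hψ]
    rw [← this, mul_one]; rfl
  have hψ01 : ψ 1 = ψ 0 := by simpa [hψ] using congrArg Real.log (hper 0)
  let w : ℝ → ℝ := variationOnFromTo ψ (Icc 0 1) 0
  have hfr : ∀ x : ℝ, Int.fract x ∈ Icc (0:ℝ) 1 := fun x =>
    ⟨Int.fract_nonneg x, (Int.fract_lt_one x).le⟩
  have h0 : (0:ℝ) ∈ Icc (0:ℝ) 1 := by simp
  have h1 : (1:ℝ) ∈ Icc (0:ℝ) 1 := by simp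
  have hw : ∀ x ∈ Icc (0:ℝ) 1, ∀ y ∈ Icc (0:ℝ) 1, x ≤ y → |ψ y - ψ x| ≤ w y - w x := by
    intro x hx y hy hxy
    have h2 := variationOnFromTo.add hψloc h0 hx hy
    have h3 : |ψ y - ψ x| ≤ variationOnFromTo ψ (Icc 0 1) x y := by
      rw [variationOnFromTo.eq_of_le ψ _ hxy, ← Real.dist_eq]
      have := (hψbv.mono (t := Icc 0 1 ∩ Icc x y) inter_subset_left).dist_le
        (x := y) (y := x) ⟨hy, hxy, le_rfl⟩ ⟨hx, le_rfl, hxy⟩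
      exact this
    simp only [w]; linarith
  refine ⟨fun x => w (Int.fract x) + (w 1) * ⌊x⌋, w 1, fun x y hxy => ?_, fun x => ?_⟩
  · change |ψ y - ψ x| ≤ _
    rw [← hψper x, ← hψper y]
    rcases (Int.floor_mono hxy).eq_or_lt with h | h
    · have := hw _ (hfr x) _ (hfr y) (by
        have := Int.self_sub_floor x
        have := Int.self_sub_floor y
        have : (⌊x⌋ : ℝ) = ⌊y⌋ := by exact_mod_cast h
        linarith)
      simp only [h]; linarith
    · -- pass through the right end of the period of `x` and the left end of the period of `y`
      have e1 := hw _ (hfr x) 1 h1 (hfr x).2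
      have e2 := hw 0 h0 _ (hfr y) (hfr y).1
      have e3 := hw 0 h0 1 h1 zero_le_one
      have e4 : w 0 = 0 := variationOnFromTo.self _ _ _
      have e5 : (⌊x⌋ : ℝ) + 1 ≤ ⌊y⌋ := by exact_mod_cast h
      have e6 : 0 ≤ w 1 := by linarith [abs_nonneg (ψ 1 - ψ 0)]
      have e7 := mul_le_mul_of_nonneg_left e5 e6
      have e8 := abs_sub_le (ψ (Int.fract y)) (ψ 0) (ψ (Int.fract x))
      rw [hψ01] at e1
      linarith
  · simp only [Int.fract_add_one, Int.floor_add_one]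
    push_cast; ring

lemma GoodPair.abs_cases {α : ℝ} {b jb c jc : ℤ} (h : GoodPair α b jb c jc) :
    (0 < b ∧ c < 0 ∧ |b| = b ∧ |c| = -c) ∨ (b < 0 ∧ 0 < c ∧ |b| = -b ∧ |c| = c) := by
  rcases h.sign with ⟨h1, h2⟩ | ⟨h1, h2⟩
  · exact Or.inl ⟨h1, h2, abs_of_pos h1, abs_of_neg h2⟩
  · exact Or.inr ⟨h1, h2, abs_of_neg h1, abs_of_pos h2⟩

namespace C1Diffeo

variable (f : C1Diffeo)

/-- `log D(F^n)(x)`, written as a Birkhoff sum. -/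
def S (n : ℕ) (x : ℝ) : ℝ := ∑ k ∈ Finset.range n, Real.log (deriv f.F (f.act k x))

lemma S_add (m n : ℕ) (x : ℝ) : f.S (m + n) x = f.S m x + f.S n (f.act m x) := by
  simp only [S, Finset.sum_range_add, ← act_add]
  congr 1
  refine Finset.sum_congr rfl fun k _ => ?_
  push_cast
  rw [add_comm (m : ℤ)]

lemma deriv_F_add_int (x : ℝ) (j : ℤ) : deriv f.F (x + j) = deriv f.F x := by
  simpa using (periodic_deriv_of_shift f.map_add_one).int_mul j x

lemma S_add_int (n : ℕ) (x : ℝ) (j : ℤ) : f.S n (x + j) = f.S n x := by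
  simp only [S, act_add_int, deriv_F_add_int]

lemma continuous_S (n : ℕ) : Continuous (f.S n) := by
  refine continuous_finsetSum _ fun k _ => ?_
  exact ((f.contDiff.continuous_deriv le_rfl).comp (f.continuous_act_natCast k)).log
    fun x => (f.deriv_pos _).ne'

lemma hasDerivAt_F (x : ℝ) : HasDerivAt f.F (deriv f.F x) x :=
  (f.contDiff.differentiable one_ne_zero x).hasDerivAt

lemma hasDerivAt_act (n : ℕ) (x : ℝ) : HasDerivAt (f.act n) (Real.exp (f.S n x)) x := by
  induction n with
  | zero =>
    simp only [S, Finset.range_zero, Finset.sum_empty, Real.exp_zero]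
    exact hasDerivAt_id x
  | succ n ih =>
    have h : f.act (n + 1 : ℕ) = f.F ∘ f.act n := funext fun y => by
      rw [show ((n + 1 : ℕ) : ℤ) = 1 + n by push_cast; ring, act_add, act_one]; rfl
    rw [h]
    have hexp : Real.exp (f.S (n + 1) x) = deriv f.F (f.act n x) * Real.exp (f.S n x) := by
      rw [S_add, Real.exp_add, mul_comm]
      simp [S, act_zero, Real.exp_log (f.deriv_pos _)]
    rw [hexp]
    exact (f.hasDerivAt_F (f.act n x)).comp x ih

lemma exists_slope (n : ℕ) {x y : ℝ} (hxy : x < y) :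
    ∃ z ∈ Ioo x y, f.act n y - f.act n x = Real.exp (f.S n z) * (y - x) := by
  obtain ⟨z, hz, h⟩ := exists_hasDerivAt_eq_slope (f.act n) (fun z => Real.exp (f.S n z)) hxy
    (f.continuous_act_natCast n).continuousOn (fun z _ => f.hasDerivAt_act n z)
  refine ⟨z, hz, ?_⟩
  rw [h, div_mul_cancel₀ _ (sub_pos.2 hxy).ne']

lemma exists_S_eq_zero (n : ℕ) : ∃ x, f.S n x = 0 := by
  obtain ⟨z, -, hz⟩ := f.exists_slope n zero_lt_one
  have := f.act_add_int n 0 1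
  simp only [zero_add, Int.cast_one] at this
  exact ⟨z, by rw [← Real.exp_eq_one_iff]; linarith⟩

variable {f}

lemma act_le_act (hirr : Irrational f.rot) {k i l j : ℤ}
    (h : k * f.rot + i ≤ l * f.rot + j) (x : ℝ) : f.act k x + i ≤ f.act l x + j := by
  rcases h.lt_or_eq with h | h
  · exact (f.act_lt_act h x).le
  · have hk : k = l := by
      by_contra hkl
      have h1 : k - l ≠ 0 := sub_ne_zero.2 hkl
      apply (hirr.intCast_mul h1).ne_int (j - i)
      push_cast; linarith
    subst hk
    have : (i : ℝ) = j := by linarith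
    rw [this]

variable {b jb c jc : ℤ}

/-- The first `|c|` iterates of a fundamental interval `[x, F^b x + jb)` have pairwise disjoint
images in the circle. -/
lemma iterates_disjoint (hirr : Irrational f.rot) (hg : GoodPair f.rot b jb c jc) {x y : ℝ}
    (hyg : y ≤ f.act b x + jb) {k l j : ℤ} (hkl : |k - l| < |c|)
    (hne : k ≠ l ∨ j ≠ 0) :
    f.act k y + j ≤ f.act l x ∨ f.act l y ≤ f.act k x + j := by
  have hθ : ((k - l : ℤ) : ℝ) * f.rot + j ≠ 0 := by
    by_cases h : k = l
    · subst h
      simpa using hne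
    · exact ((hirr.intCast_mul (sub_ne_zero.2 h)).add_intCast j).ne_zero
  have hup : ∀ m : ℤ, f.act m y ≤ f.act (m + b) x + jb := fun m => by
    rw [act_add, ← act_add_int]
    exact (f.strictMono_act m).monotone hyg
  rcases lt_or_gt_of_ne hθ with h | h
  · left
    have h1 := hg.gap (l - k) (-j) (by rwa [abs_sub_comm]) (by push_cast at h ⊢; linarith)
    push_cast at h1
    have h2 := act_le_act hirr (k := k + b) (i := jb + j) (l := l) (j := 0)
      (by push_cast; linarith) x
    push_cast at h2
    linarith [hup k]
  · right
    have h1 := hg.gap (k - l) j hkl h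
    push_cast at h1
    have h2 := act_le_act hirr (k := l + b) (i := jb) (l := k) (j := j)
      (by push_cast; linarith) x
    linarith [hup l]

variable {v : ℝ → ℝ} {V : ℝ}

lemma packing_iterates (hirr : Irrational f.rot) (hg : GoodPair f.rot b jb c jc) {x y : ℝ}
    (hxy : x < y) (hyg : y ≤ f.act b x + jb) {G : ℝ → ℝ} (hG : Monotone G) {C : ℝ}
    (hG1 : ∀ x, G (x + 1) = G x + C) (A : Finset ℕ)
    (hA : ∀ k ∈ A, ∀ l ∈ A, |(k : ℤ) - l| < |c|) :
    ∑ k ∈ A, (G (f.act k y) - G (f.act k x)) ≤ C :=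
  packing hG hG1 A (fun k => f.act k x) (fun k => f.act k y)
    (fun k _ => f.strictMono_act k hxy)
    (fun k hk l hl j hne => iterates_disjoint hirr hg hyg (hA k hk l hl)
      (by simpa using hne))

/-- Denjoy's distortion estimate. -/
lemma distortion (hirr : Irrational f.rot) (hg : GoodPair f.rot b jb c jc)
    (hv : IsVarBound f v V) {x y : ℝ} (hxy : x ≤ y) (hyg : y ≤ f.act b x + jb) {n : ℕ}
    (hn : (n : ℤ) ≤ |c|) : |f.S n y - f.S n x| ≤ V := by
  rcases hxy.eq_or_lt with rfl | hlt
  · simpa using hv.nonneg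
  calc |f.S n y - f.S n x|
      = |∑ k ∈ Finset.range n, (Real.log (deriv f.F (f.act k y)) -
          Real.log (deriv f.F (f.act k x)))| := by rw [S, S, Finset.sum_sub_distrib]
    _ ≤ ∑ k ∈ Finset.range n, |Real.log (deriv f.F (f.act k y)) -
          Real.log (deriv f.F (f.act k x))| := Finset.abs_sum_le_sum_abs _ _
    _ ≤ ∑ k ∈ Finset.range n, (v (f.act k y) - v (f.act k x)) :=
        Finset.sum_le_sum fun k _ => hv.bound _ _ ((f.strictMono_act k).monotone hxy)
    _ ≤ V := packing_iterates hirr hg hlt hyg hv.monotone hv.add_one _ fun k hk l hl => by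
        rw [Finset.mem_range] at hk hl
        rw [abs_lt]; omega

lemma distortion_two (hirr : Irrational f.rot) (hg : GoodPair f.rot b jb c jc)
    (hv : IsVarBound f v V) {x y : ℝ} (hxy : x ≤ y) (hyg : y ≤ f.act b x + jb) {n : ℕ}
    (hn : (n : ℤ) ≤ 2 * |c|) : |f.S n y - f.S n x| ≤ 2 * V := by
  obtain ⟨m, k, rfl, hm, hk⟩ : ∃ m k : ℕ, n = m + k ∧ (m : ℤ) ≤ |c| ∧ (k : ℤ) ≤ |c| :=
    by
    have := Int.natCast_natAbs c
    exact ⟨min n c.natAbs, n - min n c.natAbs, by omega, by omega, by omega⟩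
  have h1 := distortion hirr hg hv hxy hyg hm
  have h2 := distortion hirr hg hv (x := f.act m x) (y := f.act m y)
    ((f.strictMono_act m).monotone hxy) (by
      rw [← act_add, add_comm b, act_add, ← act_add_int]
      exact (f.strictMono_act m).monotone hyg) hk
  rw [S_add, S_add]
  have h3 := abs_add_le (f.S m y - f.S m x) (f.S k (f.act m y) - f.S k (f.act m x))
  rw [show f.S m y + f.S k (f.act m y) - (f.S m x + f.S k (f.act m x)) =
    (f.S m y - f.S m x) + (f.S k (f.act m y) - f.S k (f.act m x)) by ring]
  linarith

/-- The first `|b| + |c|` iterates of a fundamental interval cover the circle. -/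
lemma exists_cover (hg : GoodPair f.rot b jb c jc) (x y : ℝ) :
    ∃ (k : ℕ) (j : ℤ), (k : ℤ) < |b| + |c| ∧ f.act k x + j ≤ y ∧
      y < f.act k (f.act b x + jb) + j := by
  let p : ℕ → ℝ := fun k => f.act k x + ⌊y - f.act k x⌋
  have hp : ∀ k, p k ≤ y := fun k => by linarith [Int.floor_le (y - f.act k x)]
  have hb := hg.abs_cases
  have hb' := Int.natCast_natAbs b
  have hc' := Int.natCast_natAbs c
  -- choose the orbit point modulo `1` which is closest to `y` from the left
  obtain ⟨k, hk, hmax⟩ := Finset.exists_max_image (Finset.range (b.natAbs + c.natAbs)) p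
    ⟨0, by simp; omega⟩
  rw [Finset.mem_range] at hk
  have hno : ∀ a ja : ℤ, 0 < a * f.rot + ja → 0 ≤ k + a → k + a < |b| + |c| →
      y < f.act (k + a) x + ⌊y - f.act k x⌋ + ja := by
    intro a ja hpos h0 hM
    by_contra! hle
    obtain ⟨l, hl⟩ := Int.eq_ofNat_of_zero_le h0
    have h1 := hmax l (by rw [Finset.mem_range]; omega)
    have h2 : ⌊y - f.act k x⌋ + ja ≤ ⌊y - f.act l x⌋ := by
      rw [Int.le_floor, ← hl]; push_cast; linarith
    have h3 : ((⌊y - f.act k x⌋ : ℤ) : ℝ) + ja ≤ ⌊y - f.act l x⌋ := by exact_mod_cast h2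
    have h4 := f.lt_act hpos (f.act k x)
    rw [← act_add, add_comm a, hl] at h4
    simp only [p] at h1
    linarith
  refine ⟨k, ⌊y - f.act k x⌋, by omega, hp k, ?_⟩
  rw [act_add_int, ← act_add]
  by_cases hkb : 0 ≤ k + b ∧ k + b < |b| + |c|
  · linarith [hno b jb hg.b_pos hkb.1 hkb.2]
  · have h1 := hno c jc hg.c_pos (by omega) (by omega)
    have h2 := f.act_lt_act (k := k + c) (i := jc) (l := k + b) (j := jb)
      (by push_cast; linarith [hg.c_lt_b]) x
    linarith

/-- The Denjoy inequality: the derivatives of the iterates `F^|b|` are bounded independently of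
the good pair. -/
lemma denjoy_inequality (hirr : Irrational f.rot) (hg : GoodPair f.rot b jb c jc)
    (hv : IsVarBound f v V) (y : ℝ) : |f.S b.natAbs y| ≤ 3 * V := by
  obtain ⟨x, hx⟩ := f.exists_S_eq_zero b.natAbs
  obtain ⟨k, j, hk, hlo, hhi⟩ := exists_cover hg x y
  have hbc := hg.b_le_c
  have hb' := Int.natCast_natAbs b
  set q := b.natAbs with hq
  set z := f.act (-k) (y - j) with hz
  have hkz : f.act k z = y - j := f.act_act_neg k _
  have hxz : x ≤ z := by
    rw [← (f.strictMono_act k).le_iff_le, hkz]; linarith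
  have hzg : z ≤ f.act b x + jb := by
    rw [← (f.strictMono_act k).le_iff_le, hkz]; linarith
  have h1 : f.S q y = f.S q z + (f.S k (f.act q z) - f.S k z) := by
    have e1 := f.S_add q k z
    rw [add_comm, f.S_add k q z, hkz] at e1
    have e2 := f.S_add_int q (y - j) j
    rw [sub_add_cancel] at e2
    linarith
  have h2 : |f.S q z| ≤ V := by
    simpa [hx] using distortion hirr hg hv hxz hzg (n := q) (by omega)
  have h3 : |f.S k (f.act q z) - f.S k z| ≤ 2 * V := by
    rcases hg.sign with ⟨hb, -⟩ | ⟨hb, -⟩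
    · have hqb : (q : ℤ) = b := by omega
      have := distortion_two hirr hg hv (x := z) (y := f.act b z + jb)
        (f.lt_act hg.b_pos z).le le_rfl (n := k) (by omega)
      rwa [S_add_int, ← hqb] at this
    · have hqb : (q : ℤ) = -b := by omega
      have hw : f.act b (f.act q z + ((-jb : ℤ) : ℝ)) + jb = z := by
        rw [act_add_int, hqb, act_act_neg]; push_cast; ring
      have := distortion_two hirr hg hv (x := f.act q z + ((-jb : ℤ) : ℝ)) (y := z)
        (by
          have := f.lt_act hg.b_pos (f.act q z + ((-jb : ℤ) : ℝ))
          rw [hw] at this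
          exact this.le) hw.ge (n := k) (by omega)
      rwa [S_add_int, abs_sub_comm] at this
  rw [h1]
  linarith [abs_add_le (f.S q z) (f.S k (f.act q z) - f.S k z)]

/-- Denjoy's theorem in the form that is needed: there are no wandering intervals, so the
fundamental intervals starting at `s` shrink to `s`. -/
lemma exists_short_fundamental (hirr : Irrational f.rot) (hv : IsVarBound f v V) {s t : ℝ}
    (hst : s < t) : ∃ b jb c jc : ℤ, GoodPair f.rot b jb c jc ∧ f.act b s + jb < t := by
  by_contra! h
  -- otherwise `[s, t)` is a wandering interval
  have hdis : ∀ (k l j : ℤ), 0 < ((k - l : ℤ) : ℝ) * f.rot + j → f.act l t ≤ f.act k s + j := by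
    intro k l j hpos
    obtain ⟨b, jb, c, jc, hg, hb⟩ := exists_goodPair hirr hpos
    have h1 := (f.strictMono_act l).monotone (h b jb c jc hg)
    rw [act_add_int, ← act_add] at h1
    have h2 := f.act_lt_act (k := l + b) (i := jb) (l := k) (j := j)
      (by push_cast at hb ⊢; linarith) s
    linarith
  have hpack : ∀ A : Finset ℕ, ∑ k ∈ A, (f.act k t - f.act k s) ≤ 1 := fun A =>
    packing monotone_id (fun x => rfl) A (fun k => f.act k s) (fun k => f.act k t)
      (fun k _ => f.strictMono_act k hst) (fun k _ l _ j hne => by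
        have hθ : (((k : ℤ) - l : ℤ) : ℝ) * f.rot + j ≠ 0 := by
          by_cases h : k = l
          · subst h
            simpa using hne
          · exact ((hirr.intCast_mul (by omega)).add_intCast j).ne_zero
        rcases lt_or_gt_of_ne hθ with h1 | h1
        · left
          have := hdis l k (-j) (by push_cast at h1 ⊢; linarith)
          push_cast at this
          linarith
        · right
          exact hdis k l j h1)
  -- but infinitely many of its iterates have length bounded below by the Denjoy inequality
  let Q : Set ℕ := {q | Real.exp (-(3 * V)) * (t - s) ≤ f.act q t - f.act q s}
  have hQ : Q.Infinite := by
    refine Set.infinite_of_forall_exists_gt fun n => ?_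
    obtain ⟨b, jb, c, jc, hg, -, hb⟩ := exists_goodPair_large hirr one_pos n (by positivity)
    refine ⟨b.natAbs, ?_, by have := Int.natCast_natAbs b; omega⟩
    obtain ⟨z, -, hz⟩ := f.exists_slope b.natAbs hst
    change Real.exp (-(3 * V)) * (t - s) ≤ _
    rw [hz]
    have := (abs_le.1 (denjoy_inequality hirr hg hv z)).1
    have h0 : 0 ≤ t - s := by linarith
    gcongr
  have hδ : 0 < Real.exp (-(3 * V)) * (t - s) := mul_pos (Real.exp_pos _) (by linarith)
  obtain ⟨N, hN⟩ := exists_nat_gt (1 / (Real.exp (-(3 * V)) * (t - s)))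
  obtain ⟨A, hA, hcard⟩ := hQ.exists_subset_card_eq N
  have h1 := Finset.card_nsmul_le_sum A (fun k : ℕ => f.act k t - f.act k s) _
    (fun k hk => hA hk)
  rw [hcard, nsmul_eq_mul] at h1
  rw [div_lt_iff₀ hδ] at hN
  linarith [hpack A]

/-- The derivatives along the covering orbit of a fundamental interval are summable with a bound
proportional to the inverse of its length. -/
lemma sum_exp_S_le (hirr : Irrational f.rot) (hg : GoodPair f.rot b jb c jc)
    (hv : IsVarBound f v V) (x : ℝ) :
    (∑ k ∈ Finset.range (b.natAbs + c.natAbs), Real.exp (f.S k x)) * (f.act b x + jb - x) ≤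
      2 * Real.exp (2 * V) := by
  have hb' := Int.natCast_natAbs b
  have hc' := Int.natCast_natAbs c
  have hbc := hg.b_le_c
  set y := f.act b x + jb with hy
  have hxy : x < y := f.lt_act hg.b_pos x
  have hlen : ∀ k ∈ Finset.range (b.natAbs + c.natAbs),
      Real.exp (f.S k x) * (y - x) ≤ Real.exp (2 * V) * (f.act k y - f.act k x) := by
    intro k hk
    rw [Finset.mem_range] at hk
    obtain ⟨z, hz, h⟩ := f.exists_slope k hxy
    have h1 := (abs_le.1 (distortion_two hirr hg hv hz.1.le hz.2.le (n := k) (by omega))).1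
    rw [h, ← mul_assoc, ← Real.exp_add]
    have h0 : 0 ≤ y - x := by linarith
    gcongr
    linarith
  have hsum : ∑ k ∈ Finset.range (b.natAbs + c.natAbs), (f.act k y - f.act k x) ≤ 2 := by
    rw [← Finset.sum_range_add_sum_Ico _ (show c.natAbs ≤ b.natAbs + c.natAbs by omega)]
    have h1 := packing_iterates hirr hg hxy le_rfl monotone_id (C := 1) (fun _ => rfl)
      (Finset.range c.natAbs) fun k hk l hl => by
        rw [Finset.mem_range] at hk hl
        rw [abs_lt]; omega
    have h2 := packing_iterates hirr hg hxy le_rfl monotone_id (C := 1) (fun _ => rfl)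
      (Finset.Ico c.natAbs (b.natAbs + c.natAbs)) fun k hk l hl => by
        rw [Finset.mem_Ico] at hk hl
        rw [abs_lt]; omega
    simp only [id] at h1 h2
    linarith
  rw [Finset.sum_mul]
  refine (Finset.sum_le_sum hlen).trans ?_
  rw [← Finset.mul_sum, mul_comm]
  gcongr

end C1Diffeo

/-! ### Measures that are subinvariant for the action on densities -/

lemma continuous_circle_iff {Y : Type*} [TopologicalSpace Y] {h : 𝕊 → Y} :
    Continuous h ↔ Continuous fun x : ℝ => h (x : 𝕊) :=
  isQuotientMap_quotient_mk'.continuous_iff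

/-- The image in the circle of the interval `[s, t)`. -/
def arc (s t : ℝ) : Set 𝕊 := (fun x : ℝ => (x : 𝕊)) '' Ico s t

lemma measurableSet_arc (s t : ℝ) : MeasurableSet (arc s t) := by
  have h : Ico s t = ⋃ n : ℕ, Icc s (t - 1 / (n + 1)) := by
    ext x
    simp only [mem_Ico, mem_iUnion, mem_Icc]
    constructor
    · rintro ⟨h1, h2⟩
      obtain ⟨n, hn⟩ := exists_nat_one_div_lt (sub_pos.2 h2)
      exact ⟨n, h1, by linarith⟩
    · rintro ⟨n, h1, h2⟩
      have : (0 : ℝ) < 1 / (n + 1) := Nat.one_div_pos_of_nat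
      exact ⟨h1, by linarith⟩
  rw [arc, h, image_iUnion]
  exact MeasurableSet.iUnion fun n =>
    (isCompact_Icc.image (AddCircle.continuous_mk' 1)).measurableSet

lemma coe_eq_coe_circle {x y : ℝ} : (x : 𝕊) = (y : 𝕊) ↔ ∃ j : ℤ, y + j = x := by
  rw [← sub_eq_zero, ← AddCircle.coe_sub, AddCircle.coe_eq_zero_iff]
  refine exists_congr fun j => ?_
  rw [zsmul_one, eq_sub_iff_add_eq, add_comm]

lemma coe_mem_arc {s t x : ℝ} : (x : 𝕊) ∈ arc s t ↔ ∃ j : ℤ, s ≤ x + j ∧ x + j < t := by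
  constructor
  · rintro ⟨y, hy, hyx⟩
    obtain ⟨j, rfl⟩ := coe_eq_coe_circle.1 hyx
    exact ⟨j, hy⟩
  · rintro ⟨j, h⟩
    exact ⟨x + j, h, coe_eq_coe_circle.2 ⟨j, rfl⟩⟩

namespace C1Diffeo

variable (f : C1Diffeo)

lemma toCircle_coe (x : ℝ) : f.toCircle x = (f.F x : 𝕊) := rfl

lemma continuous_toCircle : Continuous f.toCircle :=
  continuous_circle_iff.2 ((AddCircle.continuous_mk' 1).comp f.contDiff.continuous)

lemma iterate_toCircle_coe (n : ℕ) (x : ℝ) : f.toCircle^[n] x = (f.act n x : 𝕊) := by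
  induction n with
  | zero => rfl
  | succ n ih =>
    rw [iterate_succ_apply', ih, toCircle_coe, ← act_one, ← act_add]
    congr 2; push_cast; ring

/-- The cocycle `D(f^n) = exp (S n)`, as an extended nonnegative function on the circle. -/
def wt (n : ℕ) : 𝕊 → ENNReal :=
  Function.Periodic.lift (f := fun x : ℝ => ENNReal.ofReal (Real.exp (f.S n x))) (fun x => by
    simpa using congrArg (fun s => ENNReal.ofReal (Real.exp s)) (f.S_add_int n x 1))

lemma wt_coe (n : ℕ) (x : ℝ) : f.wt n x = ENNReal.ofReal (Real.exp (f.S n x)) := rfl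

lemma continuous_wt (n : ℕ) : Continuous (f.wt n) :=
  continuous_circle_iff.2
    (ENNReal.continuous_ofReal.comp (Real.continuous_exp.comp (f.continuous_S n)))

lemma S_one (x : ℝ) : f.S 1 x = Real.log (deriv f.F x) := by simp [S, act_zero]

lemma exp_S_one (x : ℝ) : Real.exp (f.S 1 x) = deriv f.F x := by
  rw [S_one, Real.exp_log (f.deriv_pos x)]

lemma wt_succ (n : ℕ) (z : 𝕊) : f.wt (n + 1) z = f.wt n (f.toCircle z) * f.wt 1 z := by
  induction z using QuotientAddGroup.induction_on with
  | H x =>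
    rw [toCircle_coe, wt_coe, wt_coe, wt_coe, ← ENNReal.ofReal_mul (Real.exp_pos _).le,
      ← Real.exp_add, add_comm n, S_add, add_comm]
    simp [act_one]

/-- `ν ≤ f_* (Df · ν)`: the measure `ν` does not exceed the one obtained from it by the dual of the
action `φ ↦ (φ ∘ f) · Df` on densities. -/
def IsSub (ν : Measure 𝕊) : Prop := ν ≤ (ν.withDensity (f.wt 1)).map f.toCircle

variable {f}

lemma IsSub.lintegral_le {ν : Measure 𝕊} (h : f.IsSub ν) {φ : 𝕊 → ENNReal} (hφ : Measurable φ)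
    (n : ℕ) : ∫⁻ z, φ z ∂ν ≤ ∫⁻ z, φ (f.toCircle^[n] z) * f.wt n z ∂ν := by
  induction n with
  | zero =>
    have : ∀ z, f.wt 0 z = 1 := fun z => by
      induction z using QuotientAddGroup.induction_on with
      | H x => simp [wt_coe, S]
    simp [this]
  | succ n ih =>
    refine ih.trans ?_
    have hm := f.continuous_toCircle.measurable
    have hmeas : Measurable fun z => φ (f.toCircle^[n] z) * f.wt n z :=
      (hφ.comp (hm.iterate n)).mul (f.continuous_wt n).measurable
    refine (lintegral_mono' h le_rfl).trans ?_
    rw [lintegral_map hmeas hm]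
    refine le_of_eq ((lintegral_withDensity_eq_lintegral_mul _
      (f.continuous_wt 1).measurable (hmeas.comp hm)).trans (lintegral_congr fun z => ?_))
    simp only [Pi.mul_apply, Function.comp_apply, iterate_succ_apply]
    rw [f.wt_succ n]
    ring

variable {b jb c jc : ℤ} {v : ℝ → ℝ} {V : ℝ}

lemma mem_arc_of_iterate {k : ℕ} {x y : ℝ} {z : 𝕊}
    (h : f.toCircle^[k] z ∈ arc (f.act k x) (f.act k y)) : z ∈ arc x y := by
  induction z using QuotientAddGroup.induction_on with
  | H w =>
    change f.toCircle^[k] (w : 𝕊) ∈ _ at h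
    change (w : 𝕊) ∈ _
    rw [iterate_toCircle_coe, coe_mem_arc] at h
    rw [coe_mem_arc]
    obtain ⟨j, h1, h2⟩ := h
    rw [← act_add_int] at h1 h2
    exact ⟨j, (f.strictMono_act k).le_iff_le.1 h1, (f.strictMono_act k).lt_iff_lt.1 h2⟩

/-- By bounded distortion, a subinvariant measure is controlled on the iterates of a fundamental
interval by its value on that interval. -/
lemma IsSub.measure_arc_iterate_le {ν : Measure 𝕊} (h : f.IsSub ν) (hirr : Irrational f.rot)
    (hg : GoodPair f.rot b jb c jc) (hv : IsVarBound f v V) (x : ℝ) {k : ℕ}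
    (hk : (k : ℤ) ≤ 2 * |c|) :
    ν (arc (f.act k x) (f.act k (f.act b x + jb))) ≤
      ENNReal.ofReal (Real.exp (2 * V) * Real.exp (f.S k x)) * ν (arc x (f.act b x + jb)) := by
  set y := f.act b x + jb
  have hA := measurableSet_arc (f.act k x) (f.act k y)
  calc ν (arc (f.act k x) (f.act k y))
      = ∫⁻ z, (arc (f.act k x) (f.act k y)).indicator 1 z ∂ν := (lintegral_indicator_one hA).symm
    _ ≤ ∫⁻ z, (arc (f.act k x) (f.act k y)).indicator 1 (f.toCircle^[k] z) * f.wt k z ∂ν :=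
        h.lintegral_le (measurable_one.indicator hA) k
    _ ≤ ∫⁻ z, (arc x y).indicator
          (fun _ => ENNReal.ofReal (Real.exp (2 * V) * Real.exp (f.S k x))) z ∂ν := by
        refine lintegral_mono fun z => ?_
        by_cases hz : f.toCircle^[k] z ∈ arc (f.act k x) (f.act k y)
        · have hz' := mem_arc_of_iterate hz
          rw [indicator_of_mem hz, indicator_of_mem hz', Pi.one_apply, one_mul]
          obtain ⟨w, ⟨hw1, hw2⟩, rfl⟩ := hz'
          change f.wt k (w : 𝕊) ≤ _
          rw [wt_coe, ← Real.exp_add]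
          have := (abs_le.1 (distortion_two hirr hg hv hw1 hw2.le hk)).2
          exact ENNReal.ofReal_le_ofReal (Real.exp_le_exp.2 (by linarith))
        · rw [indicator_of_notMem hz, zero_mul]
          exact bot_le
    _ = _ := lintegral_indicator_const (measurableSet_arc x y) _

/-- The union of the first `|b| + |c|` iterates of a fundamental interval is the whole circle;
adding up the estimates on the single iterates yields a lower bound for the density of `ν` on the
fundamental interval. -/
lemma IsSub.mul_le_fundamental {ν : Measure 𝕊} [IsFiniteMeasure ν] (h : f.IsSub ν)
    (hirr : Irrational f.rot)
    (hg : GoodPair f.rot b jb c jc) (hv : IsVarBound f v V) (x : ℝ) :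
    ν.real univ * (f.act b x + jb - x) ≤
      2 * Real.exp (4 * V) * ν.real (arc x (f.act b x + jb)) := by
  set y := f.act b x + jb with hy
  have hb' := Int.natCast_natAbs b
  have hc' := Int.natCast_natAbs c
  have hbc := hg.b_le_c
  have hcov : (univ : Set 𝕊) ⊆ ⋃ k ∈ Finset.range (b.natAbs + c.natAbs),
      arc (f.act k x) (f.act k y) := by
    intro z _
    induction z using QuotientAddGroup.induction_on with
    | H w =>
      obtain ⟨k, j, hk, h1, h2⟩ := exists_cover hg x w
      simp only [mem_iUnion, Finset.mem_range]
      refine ⟨k, by omega, ?_⟩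
      change (w : 𝕊) ∈ _
      exact coe_mem_arc.2 ⟨-j, by push_cast; linarith, by push_cast; linarith⟩
  have hle : ν.real univ ≤ ∑ k ∈ Finset.range (b.natAbs + c.natAbs),
      Real.exp (2 * V) * Real.exp (f.S k x) * ν.real (arc x y) := by
    refine (measureReal_mono hcov (measure_ne_top _ _)).trans ((measureReal_biUnion_finset_le _ _).trans ?_)
    refine Finset.sum_le_sum fun k hk => ?_
    have hk' : (k : ℤ) ≤ 2 * |c| := by
      have := Finset.mem_range.1 hk
      omega
    have := ENNReal.toReal_mono (ENNReal.mul_ne_top ENNReal.ofReal_ne_top (measure_ne_top ν _))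
      (h.measure_arc_iterate_le hirr hg hv x hk')
    rwa [ENNReal.toReal_mul, ENNReal.toReal_ofReal (by positivity)] at this
  have hpos : 0 ≤ y - x := (sub_pos.2 (f.lt_act hg.b_pos x)).le
  have hsum := sum_exp_S_le hirr hg hv x
  calc ν.real univ * (y - x) ≤ (∑ k ∈ Finset.range (b.natAbs + c.natAbs),
      Real.exp (2 * V) * Real.exp (f.S k x) * ν.real (arc x y)) * (y - x) :=
        mul_le_mul_of_nonneg_right hle hpos
    _ = Real.exp (2 * V) * ν.real (arc x y) * ((∑ k ∈ Finset.range (b.natAbs + c.natAbs),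
          Real.exp (f.S k x)) * (y - x)) := by
        rw [Finset.sum_mul, Finset.sum_mul, Finset.mul_sum]
        exact Finset.sum_congr rfl fun k _ => by ring
    _ ≤ Real.exp (2 * V) * ν.real (arc x y) * (2 * Real.exp (2 * V)) :=
        mul_le_mul_of_nonneg_left hsum (by positivity)
    _ = 2 * Real.exp (4 * V) * ν.real (arc x y) := by
        rw [show 4 * V = 2 * V + 2 * V by ring, Real.exp_add]; ring

end C1Diffeo

lemma measureReal_arc_add (ν : Measure 𝕊) [IsFiniteMeasure ν] {s t u : ℝ} (hst : s ≤ t)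
    (htu : t ≤ u) (hus : u ≤ s + 1) : ν.real (arc s t) + ν.real (arc t u) = ν.real (arc s u) := by
  have hd : Disjoint (arc s t) (arc t u) := by
    rw [Set.disjoint_left]
    rintro _ ⟨x, ⟨hx1, hx2⟩, rfl⟩ hx
    obtain ⟨j, hj1, hj2⟩ := coe_mem_arc.1 hx
    have h1 : (0 : ℝ) < j := by linarith
    have h2 : (j : ℝ) < 1 := by linarith
    norm_cast at h1 h2
    omega
  rw [← measureReal_union hd (measurableSet_arc t u), arc, arc, ← image_union,
    Ico_union_Ico_eq_Ico hst htu, arc]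

namespace C1Diffeo

variable {f : C1Diffeo} {b jb c jc : ℤ} {v : ℝ → ℝ} {V : ℝ}

/-- The lower bound for the density holds on every arc, because an arc can be filled up by
consecutive fundamental intervals. -/
lemma IsSub.mul_le_arc {ν : Measure 𝕊} [IsFiniteMeasure ν] (h : f.IsSub ν)
    (hirr : Irrational f.rot) (hv : IsVarBound f v V) {s t : ℝ} (hst : s < t) (hts : t ≤ s + 1) :
    ν.real univ * (t - s) ≤ 2 * Real.exp (4 * V) * ν.real (arc s t) := by
  have key : ∀ u ∈ Ioo s t, ν.real univ * (u - s) ≤ 2 * Real.exp (4 * V) * ν.real (arc s t) := by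
    rintro u ⟨hsu, hut⟩
    obtain ⟨b, jb, c, jc, hg, hgu⟩ := exists_short_fundamental hirr hv hut
    let p : ℕ → ℝ := fun i => f.act (i * b) s + (i * jb : ℤ)
    have hp0 : p 0 = s := by simp [p, act_zero]
    have hp : ∀ i, p (i + 1) = f.act b (p i) + jb := fun i => by
      simp only [p, act_add_int, ← act_add]
      push_cast
      rw [show ((i : ℤ) + 1) * b = b + i * b by ring]
      ring
    have hlt : ∀ i, p i < p (i + 1) := fun i => by rw [hp]; exact f.lt_act hg.b_pos _
    have hmono : StrictMono p := strictMono_nat_of_lt_succ hlt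
    have hex : ∃ i, u < p i := by
      obtain ⟨i, hi⟩ := exists_nat_gt (1 / (b * f.rot + jb))
      refine ⟨i, ?_⟩
      rw [div_lt_iff₀ hg.b_pos] at hi
      have := f.act_lt_act (k := 0) (i := 1) (l := i * b) (j := i * jb)
        (by push_cast; linarith) s
      simp only [act_zero, Int.cast_one] at this
      simp only [p]
      linarith
    have hsum : ∀ m, p m ≤ t →
        ν.real univ * (p m - s) ≤ 2 * Real.exp (4 * V) * ν.real (arc s (p m)) := by
      intro m
      induction m with
      | zero => intro _; rw [hp0, sub_self, mul_zero]; positivity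
      | succ m ih =>
        intro hm
        have h1 := ih ((hlt m).le.trans hm)
        have h2 := h.mul_le_fundamental hirr hg hv (p m)
        rw [← hp] at h2
        have hsm : s ≤ p m := hp0 ▸ hmono.monotone (Nat.zero_le m)
        rw [← measureReal_arc_add ν hsm (hlt m).le (hm.trans hts)]
        linarith
    classical
    have hm := Nat.find_spec hex
    have hmin := fun {i} => Nat.find_min hex (m := i)
    set m := Nat.find hex
    obtain ⟨i, hi⟩ : ∃ i, m = i + 1 := Nat.exists_eq_succ_of_ne_zero fun h0 => by
      rw [h0, hp0] at hm; linarith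
    have hpi : p i ≤ u := not_lt.1 (hmin (by omega))
    have hpt : p m ≤ t := by
      rw [hi, hp]
      have := (f.strictMono_act b).monotone hpi
      linarith
    have hsub : ν.real (arc s (p m)) ≤ ν.real (arc s t) :=
      measureReal_mono (image_mono (Ico_subset_Ico_right hpt))
    have hnn : 0 ≤ ν.real (univ : Set 𝕊) := measureReal_nonneg
    calc ν.real univ * (u - s) ≤ ν.real univ * (p m - s) := by gcongr
      _ ≤ _ := hsum m hpt
      _ ≤ _ := by gcongr
  have hlim : Tendsto (fun u => ν.real univ * (u - s)) (𝓝[<] t) (𝓝 (ν.real univ * (t - s))) :=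
    ((by fun_prop : Continuous fun u => ν.real univ * (u - s)).tendsto t).mono_left
      nhdsWithin_le_nhds
  exact le_of_tendsto hlim (by
    filter_upwards [Ioo_mem_nhdsLT hst] with u hu using key u hu)

/-- A subinvariant measure dominates a definite multiple of Lebesgue measure. -/
lemma IsSub.smul_volume_le {ν : Measure 𝕊} [IsFiniteMeasure ν] (h : f.IsSub ν)
    (hirr : Irrational f.rot) (hv : IsVarBound f v V) :
    ENNReal.ofReal (ν.real univ / (2 * Real.exp (4 * V))) • (volume : Measure 𝕊) ≤ ν := by
  set K := 2 * Real.exp (4 * V) with hK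
  have hKpos : 0 < K := by positivity
  refine Measure.le_iff.2 fun A _ => ?_
  refine (IsUnifLocDoublingMeasure.vitaliFamily (volume : Measure 𝕊) 1).measure_le_of_frequently_le
    ν (Measure.smul_absolutelyContinuous) A fun z _ => ?_
  have htend := IsUnifLocDoublingMeasure.tendsto_closedBall_filterAt (volume : Measure 𝕊) (K := 1)
    (x := z) (l := 𝓝[>] (0 : ℝ)) (fun _ => z) (fun r => r) tendsto_id (by
      filter_upwards [self_mem_nhdsWithin] with r hr
      have : (0 : ℝ) < r := hr
      simpa using this.le)
  refine htend.frequently (Eventually.frequently ?_)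
  filter_upwards [Ioo_mem_nhdsGT (show (0 : ℝ) < 1 / 2 by norm_num)] with r hr
  induction z using QuotientAddGroup.induction_on with
  | H x =>
    have h1 := h.mul_le_arc hirr hv (s := x - r) (t := x + r) (by linarith [hr.1])
      (by linarith [hr.2])
    have hsub : arc (x - r) (x + r) ⊆ Metric.closedBall (x : 𝕊) r := by
      rintro _ ⟨y, hy, rfl⟩
      rw [mem_closedBall_iff_norm]
      rw [← AddCircle.coe_sub, UnitAddCircle.norm_eq]
      refine (round_le _ 0).trans ?_
      simp only [Int.cast_zero, sub_zero]
      exact abs_le.2 ⟨by linarith [hy.1], by linarith [hy.2]⟩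
    rw [Measure.smul_apply, AddCircle.volume_closedBall, min_eq_right (by linarith [hr.2]),
      smul_eq_mul, ← ENNReal.ofReal_mul (by positivity)]
    refine le_trans ?_ (measure_mono hsub)
    rw [← ofReal_measureReal]
    refine ENNReal.ofReal_le_ofReal ?_
    rw [div_mul_eq_mul_div, div_le_iff₀ hKpos]
    linarith

variable (f) in
/-- Change of variables: Lebesgue measure is invariant for the action on densities. -/
lemma map_withDensity_volume :
    ((volume : Measure 𝕊).withDensity (f.wt 1)).map f.toCircle = volume := by
  refine Measure.ext_of_lintegral _ fun φ hφ => ?_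
  have hm := f.continuous_toCircle.measurable
  rw [lintegral_map hφ hm]
  refine (lintegral_withDensity_eq_lintegral_mul _
      (f.continuous_wt 1).measurable (hφ.comp hm)).trans ?_
  have himg : f.F '' Ioc 0 (0 + 1) = Ioc (f.F 0) (f.F 0 + 1) := by
    rw [← f.map_add_one]
    exact (f.strictMono_F.orderIsoOfSurjective _ f.right_inv.surjective).image_Ioc _ _
  rw [← UnitAddCircle.lintegral_preimage 0, ← UnitAddCircle.lintegral_preimage (f.F 0), ← himg,
    lintegral_image_eq_lintegral_abs_deriv_mul measurableSet_Ioc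
      (fun x _ => (f.hasDerivAt_F x).hasDerivWithinAt) f.strictMono_F.injective.injOn]
  refine lintegral_congr fun x => ?_
  rw [abs_of_pos (f.deriv_pos x), ← exp_S_one, ← wt_coe]
  rfl

/-- Subinvariant measures are multiples of Lebesgue measure: subtract the largest multiple
of Lebesgue measure below `ν`; the remainder is still subinvariant, so that it would dominate a
further multiple of Lebesgue measure if it were not zero. -/
lemma IsSub.eq_smul_volume {ν : Measure 𝕊} [IsFiniteMeasure ν] (h : f.IsSub ν)
    (hirr : Irrational f.rot) (hv : IsVarBound f v V) :
    ∃ m : ENNReal, m ≠ ⊤ ∧ ν = m • (volume : Measure 𝕊) := by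
  set m : ENNReal := sSup {t | t • (volume : Measure 𝕊) ≤ ν} with hm
  have hle : m • (volume : Measure 𝕊) ≤ ν := by
    refine Measure.le_iff.2 fun A _ => ?_
    rw [Measure.smul_apply, smul_eq_mul, hm, ENNReal.sSup_mul]
    exact iSup₂_le fun t ht => by simpa using ht A
  have hmtop : m ≠ ⊤ := by
    have := hle univ
    rw [Measure.smul_apply, smul_eq_mul] at this
    rintro h0
    rw [h0] at this
    simp at this
  have hfin : IsFiniteMeasure (m • (volume : Measure 𝕊)) := isFiniteMeasure_of_le ν hle
  set ρ := ν - m • (volume : Measure 𝕊) with hρ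
  have hadd : ρ + m • (volume : Measure 𝕊) = ν := Measure.sub_add_cancel_of_le hle
  have : IsFiniteMeasure ρ := isFiniteMeasure_of_le ν (hadd ▸ Measure.le_add_right le_rfl)
  have hρs : f.IsSub ρ := by
    have hw : AEMeasurable (f.wt 1) ρ := (f.continuous_wt 1).measurable.aemeasurable
    unfold IsSub at h ⊢
    rw [← hadd, withDensity_add_measure, withDensity_smul_measure,
      Measure.map_add _ _ f.continuous_toCircle.measurable, Measure.map_smul,
      map_withDensity_volume] at h
    refine Measure.le_iff.2 fun A _ => ?_
    exact (ENNReal.add_le_add_iff_right (measure_ne_top (m • (volume : Measure 𝕊)) A)).1 (h A)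
  have hκ := hρs.smul_volume_le hirr hv
  set κ := ENNReal.ofReal (ρ.real univ / (2 * Real.exp (4 * V))) with hκdef
  have hκm : κ + m ≤ m := by
    refine le_sSup ?_
    rw [mem_ofPred_eq, add_smul, ← hadd]
    exact add_le_add_left hκ _
  have hκ0 : κ = 0 := by
    have : κ + m ≤ 0 + m := by simpa using hκm
    simpa using (ENNReal.add_le_add_iff_right hmtop).1 this
  have hρ0 : ρ = 0 := by
    rw [hκdef, ENNReal.ofReal_eq_zero, div_le_iff₀ (by positivity), zero_mul] at hκ0
    rw [← Measure.measure_univ_eq_zero, ← ofReal_measureReal, ENNReal.ofReal_eq_zero]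
    exact hκ0
  exact ⟨m, hmtop, by rw [← hadd, hρ0, zero_add]⟩

end C1Diffeo

/-- Inequalities between finite measures can be tested on continuous functions. -/
lemma measure_le_of_forall_lintegral_le {μ₁ μ₂ : Measure 𝕊} [IsFiniteMeasure μ₁]
    [IsFiniteMeasure μ₂]
    (h : ∀ φ : BoundedContinuousFunction 𝕊 NNReal, ∫⁻ z, φ z ∂μ₁ ≤ ∫⁻ z, φ z ∂μ₂) : μ₁ ≤ μ₂ := by
  have hcl : ∀ A : Set 𝕊, IsClosed A → μ₁ A ≤ μ₂ A := fun A hA => by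
    have hpos : ∀ n : ℕ, (0 : ℝ) < 1 / (n + 1) := fun n => Nat.one_div_pos_of_nat
    have hlim := tendsto_one_div_add_atTop_nhds_zero_nat (𝕜 := ℝ)
    exact le_of_tendsto_of_tendsto'
      (tendsto_lintegral_thickenedIndicator_of_isClosed μ₁ hA hpos hlim)
      (tendsto_lintegral_thickenedIndicator_of_isClosed μ₂ hA hpos hlim) fun n => h _
  refine Measure.le_iff.2 fun A hA => ?_
  rw [hA.measure_eq_iSup_isClosed_of_ne_top (measure_ne_top μ₁ A)]
  exact iSup₂_le fun B hB => iSup_le fun hBc => (hcl B hBc).trans (measure_mono hB)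

/-! ### The positive part of a bounded functional on `C(𝕊, ℝ)` -/

/-- The positive part of a functional `Λ` on continuous functions, meaningful for `0 ≤ φ`. -/
def pPart (Λ : C(𝕊, ℝ) →ₗ[ℝ] ℝ) (φ : C(𝕊, ℝ)) : ℝ := sSup (Λ '' Icc 0 φ)

/-- A nonnegative continuous function on the circle as a real-valued one. -/
def toX (φ : CompactlySupportedContinuousMap 𝕊 NNReal) : C(𝕊, ℝ) :=
  ⟨fun x => (φ x : ℝ), NNReal.continuous_coe.comp φ.continuous⟩

lemma toX_nonneg (φ : CompactlySupportedContinuousMap 𝕊 NNReal) : 0 ≤ toX φ :=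
  fun x => (φ x).2

/-- A nonnegative real-valued continuous function on the circle as an `ℝ≥0`-valued one. -/
def ofX (φ : C(𝕊, ℝ)) : CompactlySupportedContinuousMap 𝕊 NNReal :=
  ⟨⟨fun x => (φ x).toNNReal, continuous_real_toNNReal.comp φ.continuous⟩,
    HasCompactSupport.of_compactSpace _⟩

lemma toX_ofX {φ : C(𝕊, ℝ)} (h : 0 ≤ φ) : toX (ofX φ) = φ := by
  ext x
  exact Real.coe_toNNReal _ (h x)

section pPart

variable {Λ : C(𝕊, ℝ) →ₗ[ℝ] ℝ} {C : ℝ}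

lemma norm_le_of_mem_Icc {φ ψ : C(𝕊, ℝ)} (h : ψ ∈ Icc 0 φ) : ‖ψ‖ ≤ ‖φ‖ := by
  refine (ContinuousMap.norm_le _ (norm_nonneg _)).2 fun x => ?_
  have h0 : 0 ≤ ψ x := h.1 x
  have h1 : ψ x ≤ φ x := h.2 x
  have h2 := (abs_le.1 (φ.norm_coe_le_norm x)).2
  change |ψ x| ≤ _
  exact abs_le.2 ⟨by linarith, h1.trans h2⟩

lemma bddAbove_image (hC : ∀ φ, |Λ φ| ≤ C * ‖φ‖) (φ : C(𝕊, ℝ)) : BddAbove (Λ '' Icc 0 φ) := by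
  refine ⟨|C| * ‖φ‖, ?_⟩
  rintro _ ⟨ψ, hψ, rfl⟩
  have h1 := (le_abs_self _).trans (hC ψ)
  have h2 := mul_le_mul_of_nonneg_left (norm_le_of_mem_Icc hψ) (abs_nonneg C)
  have h3 := mul_le_mul_of_nonneg_right (le_abs_self C) (norm_nonneg ψ)
  linarith

lemma le_pPart (hC : ∀ φ, |Λ φ| ≤ C * ‖φ‖) {φ ψ : C(𝕊, ℝ)} (h : ψ ∈ Icc 0 φ) :
    Λ ψ ≤ pPart Λ φ :=
  le_csSup (bddAbove_image hC φ) (mem_image_of_mem _ h)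

lemma image_nonempty {φ : C(𝕊, ℝ)} (h : 0 ≤ φ) : (Λ '' Icc 0 φ).Nonempty :=
  (nonempty_Icc.2 h).image _

lemma pPart_nonneg (hC : ∀ φ, |Λ φ| ≤ C * ‖φ‖) {φ : C(𝕊, ℝ)} (h : 0 ≤ φ) :
    0 ≤ pPart Λ φ := by
  simpa using le_pPart hC (left_mem_Icc.2 h)

open scoped Pointwise in
/-- Riesz decomposition: `[0, φ + ψ] = [0, φ] + [0, ψ]`. -/
lemma pPart_add (hC : ∀ φ, |Λ φ| ≤ C * ‖φ‖) {φ ψ : C(𝕊, ℝ)} (hφ : 0 ≤ φ) (hψ : 0 ≤ ψ) :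
    pPart Λ (φ + ψ) = pPart Λ φ + pPart Λ ψ := by
  have hI : Icc 0 (φ + ψ) = Icc 0 φ + Icc 0 ψ := by
    ext χ
    rw [Set.mem_add]
    constructor
    · rintro ⟨h1, h2⟩
      refine ⟨χ ⊓ φ, ⟨le_inf h1 hφ, inf_le_right⟩, χ - χ ⊓ φ, ⟨?_, ?_⟩, by abel⟩
      · exact sub_nonneg.2 inf_le_left
      · intro x
        have h0 : χ x ≤ φ x + ψ x := h2 x
        have h3 : 0 ≤ ψ x := hψ x
        change χ x - min (χ x) (φ x) ≤ ψ x
        rcases le_total (χ x) (φ x) with h | h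
        · rw [min_eq_left h]; linarith
        · rw [min_eq_right h]; linarith
    · rintro ⟨a, ha, b, hb, rfl⟩
      exact ⟨add_nonneg ha.1 hb.1, add_le_add ha.2 hb.2⟩
  rw [pPart, hI, Set.image_add, csSup_add (image_nonempty hφ) (bddAbove_image hC φ)
    (image_nonempty hψ) (bddAbove_image hC ψ)]
  rfl

open scoped Pointwise in
lemma pPart_smul {r : ℝ} (hr : 0 ≤ r) (φ : C(𝕊, ℝ)) :
    pPart Λ (r • φ) = r * pPart Λ φ := by
  rcases hr.eq_or_lt with rfl | hr
  · simp [pPart]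
  · have hI : Λ '' Icc 0 (r • φ) = r • (Λ '' Icc 0 φ) := by
      ext y
      rw [Set.mem_smul_set]
      constructor
      · rintro ⟨ψ, ⟨h1, h2⟩, rfl⟩
        refine ⟨_, ⟨r⁻¹ • ψ, ⟨fun x => ?_, fun x => ?_⟩, rfl⟩, ?_⟩
        · exact mul_nonneg (inv_pos.2 hr).le (h1 x)
        · exact (inv_mul_le_iff₀ hr).2 (h2 x)
        · rw [map_smul, smul_smul, mul_inv_cancel₀ hr.ne', one_smul]
      · rintro ⟨_, ⟨ψ, ⟨h1, h2⟩, rfl⟩, rfl⟩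
        refine ⟨r • ψ, ⟨fun x => mul_nonneg hr.le (h1 x), fun x => ?_⟩, map_smul _ _ _⟩
        exact mul_le_mul_of_nonneg_left (h2 x) hr.le
    rw [pPart, hI, Real.sSup_smul_of_nonneg hr.le, smul_eq_mul]
    rfl

lemma pPart_neg_add_le (hC : ∀ φ, |Λ φ| ≤ C * ‖φ‖) {φ : C(𝕊, ℝ)} (hφ : 0 ≤ φ) :
    pPart (-Λ) φ + Λ φ ≤ pPart Λ φ := by
  rw [← le_sub_iff_add_le]
  refine csSup_le (image_nonempty hφ) ?_
  rintro _ ⟨ψ, ⟨h1, h2⟩, rfl⟩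
  have := le_pPart hC (φ := φ) (ψ := φ - ψ) ⟨sub_nonneg.2 h2, sub_le_self _ h1⟩
  rw [map_sub] at this
  rw [LinearMap.neg_apply]
  linarith

/-- The functional `Λ` is the difference of its positive and negative parts. -/
lemma pPart_sub_pPart_neg (hC : ∀ φ, |Λ φ| ≤ C * ‖φ‖) {φ : C(𝕊, ℝ)} (hφ : 0 ≤ φ) :
    pPart Λ φ - pPart (-Λ) φ = Λ φ := by
  have h1 := pPart_neg_add_le hC hφ
  have h2 := pPart_neg_add_le (Λ := -Λ) (C := C) (by simpa using hC) hφ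
  rw [neg_neg, LinearMap.neg_apply] at h2
  linarith

/-- The positive part as an additive functional on nonnegative functions. -/
def posMap (hC : ∀ φ, |Λ φ| ≤ C * ‖φ‖) :
    CompactlySupportedContinuousMap 𝕊 NNReal →ₗ[NNReal] NNReal where
  toFun φ := ⟨pPart Λ (toX φ), pPart_nonneg hC (toX_nonneg φ)⟩
  map_add' φ ψ := NNReal.eq (pPart_add hC (toX_nonneg φ) (toX_nonneg ψ))
  map_smul' r φ := NNReal.eq (pPart_smul r.2 (toX φ))

/-- The measure representing the positive part of `Λ`. -/
def posMeasure (hC : ∀ φ, |Λ φ| ≤ C * ‖φ‖) : Measure 𝕊 := NNRealRMK.rieszMeasure (posMap hC)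

lemma lintegral_posMeasure (hC : ∀ φ, |Λ φ| ≤ C * ‖φ‖) {φ : C(𝕊, ℝ)} (hφ : 0 ≤ φ) :
    ∫⁻ x, ENNReal.ofReal (φ x) ∂(posMeasure hC) = ENNReal.ofReal (pPart Λ φ) := by
  have h := NNRealRMK.lintegral_rieszMeasure (posMap hC) (ofX φ)
  refine h.trans ?_
  rw [ENNReal.ofReal]
  congr 1
  refine NNReal.eq ?_
  rw [Real.coe_toNNReal _ (pPart_nonneg hC hφ)]
  change pPart Λ (toX (ofX φ)) = _
  rw [toX_ofX hφ]

instance (hC : ∀ φ, |Λ φ| ≤ C * ‖φ‖) : IsFiniteMeasure (posMeasure hC) := by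
  constructor
  have := lintegral_posMeasure hC (φ := 1) (fun _ => zero_le_one)
  simp only [ContinuousMap.one_apply, ENNReal.ofReal_one, lintegral_const, one_mul] at this
  rw [this]
  exact ENNReal.ofReal_lt_top

end pPart

namespace C1Diffeo

variable (f : C1Diffeo)

/-- The derivative `D(f^n)` as a continuous function on the circle. -/
def DX (n : ℕ) : C(𝕊, ℝ) :=
  ⟨Function.Periodic.lift (f := fun x : ℝ => Real.exp (f.S n x)) (fun x => by
    simpa using congrArg Real.exp (f.S_add_int n x 1)),
  continuous_circle_iff.2 (Real.continuous_exp.comp (f.continuous_S n))⟩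

lemma DX_coe (n : ℕ) (x : ℝ) : f.DX n x = Real.exp (f.S n x) := rfl

lemma DX_pos (n : ℕ) (z : 𝕊) : 0 < f.DX n z := by
  induction z using QuotientAddGroup.induction_on with
  | H x => exact Real.exp_pos _

lemma ofReal_DX (n : ℕ) (z : 𝕊) : ENNReal.ofReal (f.DX n z) = f.wt n z := by
  induction z using QuotientAddGroup.induction_on with
  | H x => rfl

/-- The action `φ ↦ (φ ∘ f) · Df` on densities. -/
def T (φ : C(𝕊, ℝ)) : C(𝕊, ℝ) := φ.comp ⟨f.toCircle, f.continuous_toCircle⟩ * f.DX 1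

lemma T_apply (φ : C(𝕊, ℝ)) (z : 𝕊) : f.T φ z = φ (f.toCircle z) * f.DX 1 z := rfl

lemma T_DX (n : ℕ) : f.T (f.DX n) = f.DX (n + 1) := by
  ext z
  induction z using QuotientAddGroup.induction_on with
  | H x =>
    change f.DX n (f.F x : 𝕊) * f.DX 1 (x : 𝕊) = f.DX (n + 1) (x : 𝕊)
    rw [DX_coe, DX_coe, DX_coe, ← Real.exp_add, add_comm n, S_add, add_comm]
    simp [act_one]

variable {f} {Λ : C(𝕊, ℝ) →ₗ[ℝ] ℝ} {C : ℝ}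

/-- The positive part of a functional invariant under the action on densities is subinvariant. -/
lemma isSub_posMeasure (hC : ∀ φ, |Λ φ| ≤ C * ‖φ‖) (hT : ∀ φ, Λ (f.T φ) = Λ φ) :
    f.IsSub (posMeasure hC) := by
  have hfin : IsFiniteMeasure ((posMeasure hC).withDensity (f.wt 1)) := by
    refine isFiniteMeasure_withDensity ?_
    have := lintegral_posMeasure hC (φ := f.DX 1) (fun z => (f.DX_pos 1 z).le)
    simp only [ofReal_DX] at this
    rw [this]
    exact ENNReal.ofReal_ne_top
  refine measure_le_of_forall_lintegral_le fun φ => ?_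
  have hφm : Measurable fun z => (φ z : ENNReal) :=
    (ENNReal.continuous_coe.comp φ.continuous).measurable
  have hm := f.continuous_toCircle.measurable
  let ψ : C(𝕊, ℝ) := ⟨fun z => (φ z : ℝ), NNReal.continuous_coe.comp φ.continuous⟩
  have hψ : 0 ≤ ψ := fun z => (φ z).2
  have hψ' : ∀ z, ENNReal.ofReal (ψ z) = φ z := fun z => ENNReal.ofReal_coe_nnreal
  have hTψ : ∀ χ : C(𝕊, ℝ), 0 ≤ χ → 0 ≤ f.T χ := fun χ h z =>
    mul_nonneg (h _) (f.DX_pos 1 z).le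
  have hle : pPart Λ ψ ≤ pPart Λ (f.T ψ) := by
    refine csSup_le (image_nonempty hψ) ?_
    rintro _ ⟨χ, ⟨h1, h2⟩, rfl⟩
    rw [← hT]
    refine le_pPart hC ⟨hTψ χ h1, fun z => ?_⟩
    exact mul_le_mul_of_nonneg_right (h2 _) (f.DX_pos 1 z).le
  have e1 := lintegral_posMeasure hC hψ
  have e2 := lintegral_posMeasure hC (hTψ ψ hψ)
  simp only [hψ'] at e1
  rw [e1, lintegral_map hφm hm]
  refine (ENNReal.ofReal_le_ofReal hle).trans ?_
  rw [← e2]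
  refine le_of_eq (Eq.trans (lintegral_congr fun z => ?_) (lintegral_withDensity_eq_lintegral_mul _
    (f.continuous_wt 1).measurable (hφm.comp hm)).symm)
  rw [T_apply, mul_comm, ENNReal.ofReal_mul (f.DX_pos 1 z).le, ofReal_DX, hψ']
  rfl

/-- A bounded functional that is invariant under the action on densities and vanishes on
constants is zero: its positive and negative parts are multiples of Lebesgue measure of equal
total mass. -/
lemma eq_zero_of_invariant {v : ℝ → ℝ} {V : ℝ} (hirr : Irrational f.rot) (hv : IsVarBound f v V)
    (hC : ∀ φ, |Λ φ| ≤ C * ‖φ‖) (hT : ∀ φ, Λ (f.T φ) = Λ φ) (h1 : Λ 1 = 0) (φ : C(𝕊, ℝ)) :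
    Λ φ = 0 := by
  have hC' : ∀ φ, |(-Λ) φ| ≤ C * ‖φ‖ := by simpa using hC
  obtain ⟨m, hm, hν⟩ := (isSub_posMeasure hC hT).eq_smul_volume hirr hv
  obtain ⟨m', hm', hν'⟩ := (isSub_posMeasure hC' (f := f)
    (fun φ => by simp [hT])).eq_smul_volume hirr hv
  have hone : (0 : C(𝕊, ℝ)) ≤ 1 := fun _ => zero_le_one
  have hmm : m = m' := by
    have e := lintegral_posMeasure hC hone
    have e' := lintegral_posMeasure hC' hone
    have h := pPart_sub_pPart_neg hC hone
    rw [h1, sub_eq_zero] at h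
    rw [hν] at e
    rw [hν', ← h, ← e] at e'
    simpa using e'.symm
  have hpos : ∀ ψ : C(𝕊, ℝ), 0 ≤ ψ → Λ ψ = 0 := fun ψ hψ => by
    rw [← pPart_sub_pPart_neg hC hψ, sub_eq_zero]
    have e := lintegral_posMeasure hC hψ
    have e' := lintegral_posMeasure hC' hψ
    rw [hν', ← hmm, ← hν, e] at e'
    rwa [ENNReal.ofReal_eq_ofReal_iff (pPart_nonneg hC hψ) (pPart_nonneg hC' hψ)] at e'
  have h2 : Λ (φ + ‖φ‖ • 1) = 0 := hpos _ fun z => by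
    have := (abs_le.1 (φ.norm_coe_le_norm z)).1
    change 0 ≤ φ z + ‖φ‖ * 1
    linarith
  simpa [h1] using h2

end C1Diffeo

/-! ### Primitives of continuous functions on the circle -/

/-- The primitive of a continuous function on the circle, vanishing at `0`. -/
def intR (φ : C(𝕊, ℝ)) (x : ℝ) : ℝ := ∫ t in (0 : ℝ)..x, φ t

section prim

variable (φ ψ : C(𝕊, ℝ))

lemma continuous_lift_X : Continuous fun t : ℝ => φ t :=
  φ.continuous.comp (AddCircle.continuous_mk' 1)

lemma hasDerivAt_intR (x : ℝ) : HasDerivAt (intR φ) (φ x) x :=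
  (continuous_lift_X φ).integral_hasStrictDerivAt 0 x |>.hasDerivAt

lemma intR_add_one (x : ℝ) : intR φ (x + 1) = intR φ x + intR φ 1 := by
  have hper : Function.Periodic (fun t : ℝ => φ t) 1 := lft_periodic φ
  have h := hper.intervalIntegral_add_eq x 0
  rw [zero_add] at h
  have hi : ∀ a b : ℝ, IntervalIntegrable (fun t : ℝ => φ t) volume a b := fun a b =>
    (continuous_lift_X φ).intervalIntegrable a b
  simp only [intR]
  rw [← h, intervalIntegral.integral_add_adjacent_intervals (hi _ _) (hi _ _)]

/-- The lift of the primitive of `φ - ∫ φ`. -/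
def primR (x : ℝ) : ℝ := intR φ x - x * intR φ 1

lemma primR_periodic : Function.Periodic (primR φ) 1 := fun x => by
  simp only [primR, intR_add_one]; ring

lemma hasDerivAt_primR (x : ℝ) : HasDerivAt (primR φ) (φ x - intR φ 1) x := by
  have h := (hasDerivAt_intR φ x).sub ((hasDerivAt_id x).mul_const (intR φ 1))
  rw [one_mul] at h
  exact h

lemma deriv_primR : deriv (primR φ) = fun x : ℝ => φ x - intR φ 1 :=
  funext fun x => (hasDerivAt_primR φ x).deriv

lemma contDiff_primR : ContDiff ℝ 1 (primR φ) := by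
  rw [contDiff_one_iff_deriv, deriv_primR]
  exact ⟨fun x => (hasDerivAt_primR φ x).differentiableAt,
    (continuous_lift_X φ).sub continuous_const⟩

lemma intR_add (x : ℝ) : intR (φ + ψ) x = intR φ x + intR ψ x :=
  intervalIntegral.integral_add ((continuous_lift_X φ).intervalIntegrable _ _)
    ((continuous_lift_X ψ).intervalIntegrable _ _)

lemma intR_smul (c x : ℝ) : intR (c • φ) x = c * intR φ x :=
  intervalIntegral.integral_const_mul c _

/-- The primitive of `φ - ∫ φ`, as a linear operator from continuous functions on the circle
to `C¹` functions. -/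
def prim : C(𝕊, ℝ) →ₗ[ℝ] C1Sub where
  toFun φ := ⟨(primR_periodic φ).lift, contDiff_primR φ⟩
  map_add' φ ψ := by
    ext z
    induction z using QuotientAddGroup.induction_on with
    | H x =>
      change primR (φ + ψ) x = primR φ x + primR ψ x
      simp only [primR, intR_add]; ring
  map_smul' c φ := by
    ext z
    induction z using QuotientAddGroup.induction_on with
    | H x =>
      change primR (c • φ) x = c * primR φ x
      simp only [primR, intR_smul]; ring

lemma prim_coe (x : ℝ) : (prim φ : 𝕊 → ℝ) x = primR φ x := rfl

lemma derivS_coe (u : 𝕊 → ℝ) (x : ℝ) : derivS u x = deriv (lft u) x := rfl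

lemma derivS_prim_coe (x : ℝ) : derivS (prim φ : 𝕊 → ℝ) x = φ x - intR φ 1 := by
  rw [derivS_coe]
  exact (hasDerivAt_primR φ x).deriv

lemma abs_intR_le {x : ℝ} (h0 : 0 ≤ x) (h1 : x ≤ 1) : |intR φ x| ≤ ‖φ‖ := by
  have := intervalIntegral.norm_integral_le_of_norm_le_const (a := 0) (b := x) (C := ‖φ‖)
    (f := fun t : ℝ => φ t) (fun t _ => φ.norm_coe_le_norm t)
  rw [sub_zero, abs_of_nonneg h0] at this
  exact this.trans (mul_le_of_le_one_right (norm_nonneg _) h1)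

lemma c1Norm_prim_le : c1Norm (prim φ : 𝕊 → ℝ) ≤ 4 * ‖φ‖ := by
  have h1 := abs_le.1 (abs_intR_le φ zero_le_one le_rfl)
  have hA : ⨆ z : 𝕊, |(prim φ : 𝕊 → ℝ) z| ≤ 2 * ‖φ‖ := by
    refine ciSup_le fun z => ?_
    induction z using QuotientAddGroup.induction_on with
    | H x =>
      change |primR φ x| ≤ _
      have hx : primR φ x = primR φ (Int.fract x) := by
        have := (primR_periodic φ).sub_int_mul_eq (x := x) ⌊x⌋
        rw [mul_one] at this
        exact this.symm
      have hf0 := Int.fract_nonneg x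
      have hf1 := (Int.fract_lt_one x).le
      have h2 := abs_le.1 (abs_intR_le φ hf0 hf1)
      have h3 : |Int.fract x * intR φ 1| ≤ ‖φ‖ := by
        rw [abs_mul, abs_of_nonneg hf0]
        exact (mul_le_of_le_one_left (abs_nonneg _) hf1).trans (abs_le.2 h1)
      have h3 := abs_le.1 h3
      rw [hx, primR]
      exact abs_le.2 ⟨by linarith, by linarith⟩
  have hB : ⨆ z : 𝕊, |derivS (prim φ : 𝕊 → ℝ) z| ≤ 2 * ‖φ‖ := by
    refine ciSup_le fun z => ?_
    induction z using QuotientAddGroup.induction_on with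
    | H x =>
      change |derivS (prim φ : 𝕊 → ℝ) (x : 𝕊)| ≤ _
      rw [derivS_prim_coe]
      have h2 := abs_le.1 (φ.norm_coe_le_norm x)
      exact abs_le.2 ⟨by linarith, by linarith⟩
  rw [c1Norm]
  linarith

end prim

/-- The constant function `1`. -/
def oneC1 : C1Sub := ⟨fun _ => 1, (contDiff_const : ContDiff ℝ 1 fun _ : ℝ => (1 : ℝ))⟩

lemma contDiff_lft (u : C1Sub) : ContDiff ℝ 1 (lft (u : 𝕊 → ℝ)) := u.2

lemma continuous_of_isC1 {u : 𝕊 → ℝ} (hu : IsC1 u) : Continuous u :=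
  continuous_circle_iff.2 hu.continuous

/-- The derivative of a `C¹` function, as a continuous function. -/
def derivX (u : C1Sub) : C(𝕊, ℝ) :=
  ⟨derivS u, continuous_circle_iff.2 ((contDiff_lft u).continuous_deriv le_rfl)⟩

lemma intR_derivX (u : C1Sub) (x : ℝ) :
    intR (derivX u) x = (u : 𝕊 → ℝ) x - (u : 𝕊 → ℝ) ((0 : ℝ) : 𝕊) := by
  have hd : Differentiable ℝ (lft u) := (contDiff_lft u).differentiable one_ne_zero
  exact intervalIntegral.integral_eq_sub_of_hasDerivAt (f := lft u) (f' := deriv (lft u))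
    (fun y _ => (hd y).hasDerivAt)
    (((contDiff_lft u).continuous_deriv le_rfl).intervalIntegrable _ _)

lemma eq_prim_add (u : C1Sub) :
    u = prim (derivX u) + (u : 𝕊 → ℝ) ((0 : ℝ) : 𝕊) • oneC1 := by
  ext z
  induction z using QuotientAddGroup.induction_on with
  | H x =>
    change (u : 𝕊 → ℝ) (x : 𝕊) = primR (derivX u) x + (u : 𝕊 → ℝ) ((0 : ℝ) : 𝕊) * 1
    have h1 : ((1 : ℝ) : 𝕊) = ((0 : ℝ) : 𝕊) := coe_eq_coe_circle.2 ⟨1, by simp⟩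
    rw [primR, intR_derivX, intR_derivX, h1]
    ring

namespace C1Diffeo

variable {f : C1Diffeo}

lemma intR_T (φ : C(𝕊, ℝ)) (x : ℝ) : intR (f.T φ) x = intR φ (f.F x) - intR φ (f.F 0) := by
  have h := intervalIntegral.integral_comp_mul_deriv (a := 0) (b := x) (f := f.F)
    (f' := deriv f.F) (g := fun t : ℝ => φ t) (fun y _ => f.hasDerivAt_F y)
    (f.contDiff.continuous_deriv le_rfl).continuousOn (continuous_lift_X φ)
  have h2 : intR (f.T φ) x = ∫ t in (0 : ℝ)..x, ((fun t : ℝ => φ t) ∘ f.F) t * deriv f.F t := by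
    refine intervalIntegral.integral_congr fun t _ => ?_
    change f.T φ (t : 𝕊) = φ (f.F t : 𝕊) * deriv f.F t
    rw [T_apply, DX_coe, exp_S_one, toCircle_coe]
  have hi : ∀ a b : ℝ, IntervalIntegrable (fun t : ℝ => φ t) volume a b := fun a b =>
    (continuous_lift_X φ).intervalIntegrable a b
  rw [h2, h, intR, intR, intervalIntegral.integral_interval_sub_left (hi _ _) (hi _ _)]

lemma intR_T_one (φ : C(𝕊, ℝ)) : intR (f.T φ) 1 = intR φ 1 := by
  have h := f.map_add_one 0
  rw [zero_add] at h
  rw [intR_T, h, intR_add_one]; ring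

lemma intR_DX_one (x : ℝ) : intR (f.DX 1) x = f.F x - f.F 0 :=
  intervalIntegral.integral_eq_sub_of_hasDerivAt
    (fun y _ => by
      change HasDerivAt f.F (f.DX 1 (y : 𝕊)) y
      rw [DX_coe, exp_S_one]; exact f.hasDerivAt_F y)
    ((continuous_lift_X _).intervalIntegrable _ _)

lemma intR_DX (n : ℕ) : intR (f.DX n) 1 = 1 := by
  induction n with
  | zero =>
    have : ∀ t : ℝ, f.DX 0 (t : 𝕊) = 1 := fun t => by simp [DX_coe, S]
    simp [intR, this]
  | succ n ih => rw [← T_DX, intR_T_one, ih]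

/-- The composition of a `C¹` function with `f`. -/
def compC1 (f : C1Diffeo) (u : C1Sub) : C1Sub :=
  ⟨(u : 𝕊 → ℝ) ∘ f.toCircle, (contDiff_lft u).comp f.contDiff⟩

/-- The primitive of `(φ ∘ f) · Df` is the composition with `f` of the primitive of `φ`, up to a
multiple of the primitive of `Df` and a constant. -/
lemma prim_T (φ : C(𝕊, ℝ)) : prim (f.T φ) =
    f.compC1 (prim φ) + intR φ 1 • prim (f.DX 1) + (f.F 0 * intR φ 1 - intR φ (f.F 0)) • oneC1 := by
  ext z
  induction z using QuotientAddGroup.induction_on with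
  | H x =>
    change primR (f.T φ) x = primR φ (f.F x) + intR φ 1 * primR (f.DX 1) x +
      (f.F 0 * intR φ 1 - intR φ (f.F 0)) * 1
    simp only [primR]
    rw [intR_T_one, intR_T, intR_DX, intR_DX_one]
    ring

/-- An invariant distribution vanishing on constants is zero. -/
lemma eq_zero_of_apply_one {v : ℝ → ℝ} {V : ℝ} (hirr : Irrational f.rot) (hv : IsVarBound f v V)
    (L : C1Sub →ₗ[ℝ] ℝ) (hL : IsDistribution L) (hLf : InvariantUnder f L) (h1 : L oneC1 = 0)
    (u : C1Sub) : L u = 0 := by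
  obtain ⟨C, hC⟩ := hL
  let Λ : C(𝕊, ℝ) →ₗ[ℝ] ℝ := L ∘ₗ prim
  have hΛ : ∀ φ, |Λ φ| ≤ (|C| * 4) * ‖φ‖ := fun φ => by
    have hc0 : 0 ≤ c1Norm (prim φ : 𝕊 → ℝ) :=
      add_nonneg (Real.iSup_nonneg fun _ => abs_nonneg _) (Real.iSup_nonneg fun _ => abs_nonneg _)
    calc |Λ φ| ≤ C * c1Norm (prim φ : 𝕊 → ℝ) := hC _
      _ ≤ |C| * c1Norm (prim φ : 𝕊 → ℝ) := mul_le_mul_of_nonneg_right (le_abs_self C) hc0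
      _ ≤ |C| * (4 * ‖φ‖) := mul_le_mul_of_nonneg_left (c1Norm_prim_le φ) (abs_nonneg C)
      _ = _ := by ring
  have hTa : ∀ φ, Λ (f.T φ) = Λ φ + intR φ 1 * Λ (f.DX 1) := fun φ => by
    have hcomp : L (f.compC1 (prim φ)) = L (prim φ) := hLf _ _ fun _ => rfl
    simp only [Λ, LinearMap.comp_apply]
    rw [prim_T, map_add, map_add, hcomp, map_smul, map_smul, h1, smul_eq_mul, smul_zero, add_zero]
  have hDX0 : f.DX 0 = 1 := by
    ext z
    induction z using QuotientAddGroup.induction_on with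
    | H x => simp [DX_coe, S]
  have hΛ1 : Λ 1 = 0 := by
    have h := hTa 1
    have hT1 : f.T 1 = f.DX 1 := by rw [← hDX0, T_DX]
    have hone : intR 1 1 = 1 := by rw [← hDX0, intR_DX]
    rw [hT1, hone, one_mul] at h
    linarith
  have hn : ∀ n : ℕ, Λ (f.DX n) = n * Λ (f.DX 1) := fun n => by
    induction n with
    | zero => rw [hDX0, hΛ1]; simp
    | succ n ih => rw [← T_DX, hTa, intR_DX, ih]; push_cast; ring
  -- by the Denjoy inequality `D(f^q)` is bounded along a sequence of times `q`
  have ha : Λ (f.DX 1) = 0 := by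
    by_contra hne
    obtain ⟨B, hB⟩ := exists_nat_gt ((|C| * 4) * Real.exp (3 * V) / |Λ (f.DX 1)|)
    obtain ⟨b, jb, c, jc, hg, -, hb⟩ := exists_goodPair_large hirr one_pos (B : ℤ) (by positivity)
    have hnorm : ‖f.DX b.natAbs‖ ≤ Real.exp (3 * V) := by
      refine (ContinuousMap.norm_le _ (Real.exp_pos _).le).2 fun z => ?_
      rw [Real.norm_of_nonneg (f.DX_pos _ z).le]
      induction z using QuotientAddGroup.induction_on with
      | H x =>
        change Real.exp (f.S b.natAbs x) ≤ _
        exact Real.exp_le_exp.2 (abs_le.1 (denjoy_inequality hirr hg hv x)).2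
    have h2 := hΛ (f.DX b.natAbs)
    rw [hn, abs_mul, Nat.abs_cast] at h2
    have h3 := h2.trans (mul_le_mul_of_nonneg_left hnorm (by positivity))
    rw [← le_div_iff₀ (abs_pos.2 hne)] at h3
    have h4 : (B : ℝ) < b.natAbs := by
      have : B < b.natAbs := by
        rw [Int.abs_eq_natAbs] at hb
        omega
      exact_mod_cast this
    linarith
  have hz := eq_zero_of_invariant hirr hv hΛ (fun φ => by rw [hTa, ha, mul_zero, add_zero]) hΛ1
  rw [eq_prim_add u, map_add, map_smul, h1, smul_zero, add_zero]
  exact hz _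

end C1Diffeo

/-- Integration against a finite measure, as a linear functional on `C¹` functions. -/
def integralC1 (μ : Measure 𝕊) [IsFiniteMeasure μ] : C1Sub →ₗ[ℝ] ℝ where
  toFun u := ∫ x, (u : 𝕊 → ℝ) x ∂μ
  map_add' u w := integral_add
    ((continuous_of_isC1 u.2).integrable_of_hasCompactSupport (HasCompactSupport.of_compactSpace _))
    ((continuous_of_isC1 w.2).integrable_of_hasCompactSupport (HasCompactSupport.of_compactSpace _))
  map_smul' c _ := integral_const_mul c _

lemma abs_integralC1_le (μ : Measure 𝕊) [IsProbabilityMeasure μ] (u : C1Sub) :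
    |integralC1 μ u| ≤ c1Norm (u : 𝕊 → ℝ) := by
  have hbdd : BddAbove (range fun x : 𝕊 => |(u : 𝕊 → ℝ) x|) :=
    (isCompact_range (continuous_of_isC1 u.2).abs).bddAbove
  have h := norm_integral_le_of_norm_le_const (μ := μ) (f := (u : 𝕊 → ℝ))
    (C := ⨆ x : 𝕊, |(u : 𝕊 → ℝ) x|) (ae_of_all _ fun x => le_ciSup hbdd x)
  rw [probReal_univ, mul_one] at h
  refine h.trans ?_
  rw [c1Norm]
  have : 0 ≤ ⨆ x : 𝕊, |derivS (u : 𝕊 → ℝ) x| := Real.iSup_nonneg fun _ => abs_nonneg _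
  linarith

/-- **Theorem A.** Circle diffeomorphisms of irrational rotation number that belong to the
Denjoy class `C^{1+bv}` have no invariant 1-distributions different from (a scalar multiple of
integration against) the unique invariant probability measure. -/
theorem thmA_no_invariant_distributions
    (f : C1Diffeo) (hbv : BoundedVariationOn (deriv f.F) (Set.Icc 0 1))
    (hirr : Irrational f.rot)
    (μ : Measure 𝕊) [IsProbabilityMeasure μ] (hinv : MeasurePreserving f.toCircle μ μ)
    (L : C1Sub →ₗ[ℝ] ℝ) (hL : IsDistribution L) (hLf : InvariantUnder f L) :
    ∃ c : ℝ, ∀ u : C1Sub, L u = c * ∫ x, (u : 𝕊 → ℝ) x ∂μ := by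
  obtain ⟨v, V, hv⟩ := exists_isVarBound f hbv
  refine ⟨L oneC1, fun u => ?_⟩
  -- subtract the multiple of `μ` that has the same value on constants
  let L' : C1Sub →ₗ[ℝ] ℝ := L - L oneC1 • integralC1 μ
  have hL' : IsDistribution L' := by
    obtain ⟨C, hC⟩ := hL
    refine ⟨C + |L oneC1|, fun w => ?_⟩
    have h1 := hC w
    have h2 := mul_le_mul_of_nonneg_left (abs_integralC1_le μ w) (abs_nonneg (L oneC1))
    rw [← abs_mul] at h2
    have h3 := abs_sub (L w) (L oneC1 * integralC1 μ w)
    change |L w - L oneC1 * integralC1 μ w| ≤ _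
    linarith
  have hLf' : InvariantUnder f L' := by
    intro w w' hw
    have h1 : integralC1 μ w' = integralC1 μ w := by
      change ∫ x, (w' : 𝕊 → ℝ) x ∂μ = ∫ x, (w : 𝕊 → ℝ) x ∂μ
      simp only [hw]
      rw [← integral_map hinv.measurable.aemeasurable
        (by rw [hinv.map_eq]; exact (continuous_of_isC1 w.2).aestronglyMeasurable), hinv.map_eq]
    change L w' - L oneC1 * integralC1 μ w' = L w - L oneC1 * integralC1 μ w
    rw [hLf w w' hw, h1]
  have hone : L' oneC1 = 0 := by
    have : integralC1 μ oneC1 = 1 := by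
      change ∫ _, (1 : ℝ) ∂μ = 1
      simp
    change L oneC1 - L oneC1 * integralC1 μ oneC1 = 0
    rw [this]; ring
  exact sub_eq_zero.1 (C1Diffeo.eq_zero_of_apply_one hirr hv L' hL' hLf' hone u)
end
end

section
/- Let f be an orientation-preserving C^1 circle diffeomorphism whose derivative has bounded variation and whose rotation number ρ is irrational, let μ be the unique f-invariant Borel probability measure, and let (p_k/q_k) be the sequence of convergents of the continued fraction expansion of ρ. Then for every C^1 real-valued function u on the circle, the Birkhoff sums satisfy the uniform convergence u + u∘f + u∘f² + ... + u∘f^{q_k − 1} − q_k ∫ u dμ → 0 as k → ∞. -/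
/-!
Let `F` be a lift of `f` and `H` a monotone degree one map with `H ∘ F = H + ρ`. Since `μ` is an
invariant probability measure, `S_q u (x) - q ∫ u dμ` is the mean over `y` of
`S_q u (x) - S_q u (y)`, so it is enough to show that the oscillation of `S_{q_k} u` tends to `0`.

Two facts are used. The first is the Denjoy–Koksma inequality: if `g` is monotone with
`g (x + 1) = g x + V`, then `S_{q_k} g` is sandwiched, up to shifts of order `1 / q_k` in the
variable `H x`, between values of a single function `Θ` of degree `V` under the translation by
`1 / q_k` (`IsSemi.exists_sandwich`). Hence `S_{q_k} (g₁ - g₂)` has oscillation at most `12 V` for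
`g₁`, `g₂` of the same degree `V`. Applied to the variation of `log F'` this gives Denjoy's
inequality, bounded distortion on intervals of `H`-length `4 / q_k`, the injectivity of `H`
(Denjoy's theorem) and `F^{q_k} → id` modulo integers. The second is that, as a consequence, the
oscillation of `S_{q_k} (w ∘ F^j - w)` tends to `0` for every continuous `w` commuting with the unit
translation up to a constant (`IsDenjoy.asympOsc_coboundary`): `w` may have nonzero degree.

Write `u = w₁ - w₂` with `w₁`, `w₂` of class `C¹`, with positive derivatives and the same degree
`m`; their derivatives are densities of mass `m` on the circle, and two densities may be compared
modulo the coboundaries above. The main step is a minorization (`IsDenjoy.minorization`): for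
`n = q_k` large, split a density `v` as `∑_{j < n} r (F^j)'` with `r = v / ∑_{j < n} (F^j)'`, and
pull the `j`-th piece back by `F^{n - j}`. The resulting density `(F^n)' ∑_{1 ≤ i ≤ n} r ∘ F^i` is
bounded below by `c m`, where `c > 0` depends only on the variation of `log F'`: indeed `(F^n)'` is
bounded below by Denjoy's inequality, and on an interval `[z, t]` of `H`-length `4 / n` the mass of
`v` is at most a constant times `r z`, by bounded distortion, while the images of such an interval
under `F^i`, `i < n`, carry a total mass of at least `m`.

Removing the common part `c m` from the two densities leaves densities of mass `(1 - c) m`, and the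
step can be repeated. After `N` steps the Denjoy–Koksma inequality bounds the asymptotic oscillation
of `S_{q_k} u` by `12 (1 - c)^N m`, which is arbitrarily small.
-/

open MeasureTheory Function Filter Set
open scoped Topology

noncomputable section

/-! ### The Denjoy–Koksma inequality -/

/-- A map `g : ℝ → ℝ` which is monotone and satisfies `g (x + 1) = g x + V`. -/
structure MonoDeg (g : ℝ → ℝ) (V : ℝ) : Prop where
  mono : Monotone g
  add_one : ∀ x, g (x + 1) = g x + V

/-- `H` is a monotone degree one map semiconjugating the degree one homeomorphism `F` of the line
to the translation by `ρ`. -/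
structure IsSemi (F H : ℝ → ℝ) (ρ : ℝ) : Prop where
  F_mono : StrictMono F
  F_cont : Continuous F
  F_add : ∀ x, F (x + 1) = F x + 1
  H_deg : MonoDeg H 1
  semi : ∀ x, H (F x) = H x + ρ

/-- `p / q` is a reduced fraction with `|ρ - p / q| ≤ 1 / q ^ 2`. -/
structure IsApprox (ρ : ℝ) (q : ℕ) (p : ℤ) : Prop where
  pos : 0 < q
  coprime : IsCoprime p (q : ℤ)
  close : |(q : ℝ) * ρ - p| ≤ 1 / q

lemma add_int_of_add_one {g : ℝ → ℝ} {V : ℝ} (h : ∀ x, g (x + 1) = g x + V) (x : ℝ) (n : ℤ) :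
    g (x + n) = g x + n * V := by
  induction n using Int.induction_on with
  | zero => simp
  | succ i ih =>
    have := h (x + (i : ℤ))
    rw [ih] at this
    push_cast at this ⊢
    rw [← add_assoc, this]; ring
  | pred i ih =>
    have := h (x + ((-(i : ℤ) - 1 : ℤ) : ℝ))
    have e : x + ((-(i : ℤ) - 1 : ℤ) : ℝ) + 1 = x + ((-(i : ℤ) : ℤ) : ℝ) := by push_cast; ring
    rw [e, ih] at this
    push_cast at this ⊢
    linarith

namespace IsSemi

variable {F H : ℝ → ℝ} {ρ : ℝ}

lemma H_iterate (h : IsSemi F H ρ) (n : ℕ) (x : ℝ) : H (F^[n] x) = H x + n * ρ := by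
  induction n with
  | zero => simp
  | succ n ih => rw [iterate_succ_apply', h.semi, ih]; push_cast; ring

lemma H_add_int (h : IsSemi F H ρ) (x : ℝ) (n : ℤ) : H (x + n) = H x + n := by
  simpa using add_int_of_add_one h.H_deg.add_one x n

lemma F_iterate_add_int (h : IsSemi F H ρ) (k : ℕ) (x : ℝ) (n : ℤ) :
    F^[k] (x + n) = F^[k] x + n := by
  simpa using add_int_of_add_one (g := F^[k]) (V := 1) (iterate_map_add_one h.F_add k) x n

lemma exists_lt_H (h : IsSemi F H ρ) (s : ℝ) : ∃ x, s < H x := by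
  obtain ⟨n, hn⟩ := exists_int_gt (s - H 0)
  refine ⟨0 + n, ?_⟩
  rw [h.H_add_int]; linarith

lemma exists_H_lt (h : IsSemi F H ρ) (s : ℝ) : ∃ x, H x < s := by
  obtain ⟨n, hn⟩ := exists_int_lt (s - H 0)
  refine ⟨0 + n, ?_⟩
  rw [h.H_add_int]; linarith

lemma lt_of_H_lt (h : IsSemi F H ρ) {x y : ℝ} (hxy : H x < H y) : x < y :=
  lt_of_not_ge fun hh => absurd (h.H_deg.mono hh) (not_le.2 hxy)

/-- A substitute for `g ∘ H⁻¹`, available although `H` is not known to be injective at this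
point. -/
lemma exists_push (h : IsSemi F H ρ) {g : ℝ → ℝ} {V : ℝ} (hg : MonoDeg g V) :
    ∃ G : ℝ → ℝ, MonoDeg G V ∧ (∀ x, g x ≤ G (H x)) ∧ ∀ x s, s < H x → G s ≤ g x := by
  have hne : ∀ s, (g '' {x | H x ≤ s}).Nonempty := fun s => by
    obtain ⟨x, hx⟩ := h.exists_H_lt s
    exact ⟨g x, x, hx.le, rfl⟩
  have hbd : ∀ s, BddAbove (g '' {x | H x ≤ s}) := fun s => by
    obtain ⟨y, hy⟩ := h.exists_lt_H s
    refine ⟨g y, ?_⟩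
    rintro _ ⟨x, hx, rfl⟩
    exact hg.mono (h.lt_of_H_lt (lt_of_le_of_lt hx hy)).le
  refine ⟨fun s => sSup (g '' {x | H x ≤ s}), ⟨?_, ?_⟩, ?_, ?_⟩
  · intro s t hst
    exact csSup_le_csSup (hbd t) (hne s) (image_mono fun x hx => le_trans hx hst)
  · intro s
    apply le_antisymm
    · refine csSup_le (hne _) ?_
      rintro _ ⟨x, hx, rfl⟩
      have e : g x = g (x - 1) + V := by rw [← hg.add_one]; simp
      have e' : H x = H (x - 1) + 1 := by rw [← h.H_deg.add_one]; simp
      rw [e]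
      have hx' : H x ≤ s + 1 := hx
      have : g (x - 1) ≤ sSup (g '' {x | H x ≤ s}) :=
        le_csSup (hbd s) ⟨x - 1, by simp only [mem_ofPred_eq]; linarith, rfl⟩
      linarith
    · rw [← le_sub_iff_add_le]
      refine csSup_le (hne _) ?_
      rintro _ ⟨x, hx, rfl⟩
      rw [le_sub_iff_add_le, ← hg.add_one]
      refine le_csSup (hbd _) ⟨x + 1, ?_, rfl⟩
      have hx' : H x ≤ s := hx
      simp only [mem_ofPred_eq, h.H_deg.add_one]; linarith
  · intro x
    exact le_csSup (hbd _) ⟨x, by simp, rfl⟩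
  · intro x s hs
    refine csSup_le (hne _) ?_
    rintro _ ⟨y, hy, rfl⟩
    exact hg.mono (h.lt_of_H_lt (lt_of_le_of_lt hy hs)).le

end IsSemi

/-- The residues `i p`, `i < q`, run through all classes modulo `q`, so the sum of a periodic
function over the points `s + i p / q` does not change when `s` is shifted by `1 / q`. -/
lemma sum_residue_shift {P : ℝ → ℝ} (hP : ∀ x, P (x + 1) = P x) {q : ℕ} {p : ℤ} (hq : 0 < q)
    (hpq : IsCoprime p (q : ℤ)) (s : ℝ) :
    ∑ i ∈ Finset.range q, P (s + 1 / q + i * p / q) = ∑ i ∈ Finset.range q, P (s + i * p / q) := by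
  have hq0 : (q : ℝ) ≠ 0 := by positivity
  have : NeZero q := ⟨hq.ne'⟩
  obtain ⟨ψ, hψ⟩ : ∃ ψ : ZMod q → ℝ, ∀ N : ℤ, P (s + N / q) = ψ (N : ZMod q) := by
    refine ⟨fun a => P (s + (a.val : ℝ) / q), fun N => ?_⟩
    have h1 : ((N : ZMod q).val : ℤ) = N % q := ZMod.val_intCast N
    have h2 : (((N : ZMod q).val : ℕ) : ℝ) = N - q * (N / (q : ℤ) : ℤ) := by
      have : (((N : ZMod q).val : ℤ) : ℝ) = ((N % q : ℤ) : ℝ) := by rw [h1]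
      rw [Int.emod_def] at this
      push_cast at this
      exact this
    simp only [h2]
    have h3 := add_int_of_add_one (g := P) (V := 0) (by simpa using hP)
      (s + ((N : ℝ) - q * (N / (q : ℤ) : ℤ)) / q) (N / (q : ℤ))
    rw [mul_zero, add_zero] at h3
    rw [← h3]
    congr 1
    field_simp
    ring
  have key : ∀ f : ZMod q → ℝ, ∑ i ∈ Finset.range q, f (i : ZMod q) = ∑ a, f a := by
    intro f
    refine Finset.sum_bij (fun i _ => (i : ZMod q)) (fun _ _ => Finset.mem_univ _) ?_ ?_
      (fun _ _ => rfl)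
    · intro a ha b hb hab
      have := (ZMod.natCast_eq_natCast_iff' a b q).1 hab
      rwa [Nat.mod_eq_of_lt (Finset.mem_range.1 ha), Nat.mod_eq_of_lt (Finset.mem_range.1 hb)]
        at this
    · intro b _
      exact ⟨b.val, Finset.mem_range.2 (ZMod.val_lt b), ZMod.natCast_zmod_val b⟩
  have hu : IsUnit ((p : ZMod q)) := by
    obtain ⟨a, b, hab⟩ := hpq
    have : ((a * p + b * q : ℤ) : ZMod q) = 1 := by rw [hab]; simp
    push_cast at this
    simp only [CharP.cast_eq_zero, mul_zero, add_zero] at this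
    exact IsUnit.of_mul_eq_one_right _ this
  obtain ⟨w, hw⟩ := hu
  have e1 : ∀ i : ℕ, P (s + 1 / q + i * p / q) = ψ ((i : ZMod q) * p + 1) := fun i => by
    have := hψ (i * p + 1)
    push_cast at this
    rw [← this]; congr 1; ring
  have e2 : ∀ i : ℕ, P (s + i * p / q) = ψ ((i : ZMod q) * p) := fun i => by
    have := hψ (i * p)
    push_cast at this
    rw [← this]
  simp only [e1, e2]
  rw [key fun a => ψ (a * p + 1), key fun a => ψ (a * p)]
  have b1 := Equiv.sum_comp (Units.mulRight w) ψ
  have b2 := Equiv.sum_comp ((Units.mulRight w).trans (Equiv.addRight 1)) ψ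
  simp only [Units.mulRight_apply, Equiv.trans_apply, Equiv.coe_addRight, hw] at b1 b2
  rw [b1, b2]

/-- The Denjoy–Koksma sandwich: up to a shift by `O(1 / q)` in the variable `H x`, the Birkhoff sum
of length `q` of a monotone function of degree `V` is a monotone function of `H x` growing by
exactly `V` over each interval of length `1 / q`. -/
lemma IsSemi.exists_sandwich {F H : ℝ → ℝ} {ρ : ℝ} (h : IsSemi F H ρ) {g : ℝ → ℝ} {V : ℝ}
    (hg : MonoDeg g V) {q : ℕ} {p : ℤ} (hqp : IsApprox ρ q p) :
    ∃ Θ : ℝ → ℝ, Monotone Θ ∧ (∀ s, Θ (s + 1 / q) = Θ s + V) ∧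
      ∀ x, Θ (H x - 2 / q) ≤ birkhoffSum F g q x ∧ birkhoffSum F g q x ≤ Θ (H x + 1 / q) := by
  obtain ⟨G, hG, hG1, hG2⟩ := h.exists_push hg
  have hq := hqp.pos
  have hq0 : (0 : ℝ) < q := by positivity
  -- the orbit point `H (F^[i] x) = H x + i ρ` is within `1 / q` of `H x + i p / q`
  have hclose : ∀ i ∈ Finset.range q, |(i : ℝ) * ρ - i * p / q| ≤ 1 / q := by
    intro i hi
    have hi' : (i : ℝ) ≤ q := by exact_mod_cast (Finset.mem_range.1 hi).le
    have e : (i : ℝ) * ρ - i * p / q = (i / q) * (q * ρ - p) := by field_simp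
    rw [e, abs_mul, abs_of_nonneg (by positivity)]
    calc (i : ℝ) / q * |q * ρ - p| ≤ 1 * (1 / q) :=
          mul_le_mul ((div_le_one hq0).2 hi') hqp.close (abs_nonneg _) zero_le_one
      _ = 1 / q := one_mul _
  refine ⟨fun s => ∑ i ∈ Finset.range q, G (s + i * p / q), ?_, ?_, ?_⟩
  · intro s t hst
    exact Finset.sum_le_sum fun i _ => hG.mono (by linarith)
  · intro s
    have := sum_residue_shift (P := fun x => G x - V * x)
      (fun x => by simp only [hG.add_one]; ring) hq hqp.coprime s
    simp only [Finset.sum_sub_distrib, ← Finset.mul_sum, Finset.sum_add_distrib,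
      Finset.sum_const, Finset.card_range, nsmul_eq_mul] at this
    have e : (q : ℝ) * (1 / q) = 1 := by field_simp
    simp only at this ⊢
    rw [e] at this
    linarith
  · intro x
    constructor
    · refine Finset.sum_le_sum fun i hi => hG2 _ _ ?_
      rw [h.H_iterate]
      have := abs_le.1 (hclose i hi)
      have e : (2 : ℝ) / q = 1 / q + 1 / q := by ring
      have : 0 < (1 : ℝ) / q := by positivity
      linarith
    · refine Finset.sum_le_sum fun i hi => (hG1 _).trans (hG.mono ?_)
      rw [h.H_iterate]
      have := abs_le.1 (hclose i hi)
      linarith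

lemma add_nat_div {Θ : ℝ → ℝ} {V : ℝ} {q : ℕ} (h : ∀ s, Θ (s + 1 / q) = Θ s + V) (n : ℕ) (s : ℝ) :
    Θ (s + n / q) = Θ s + n * V := by
  induction n with
  | zero => simp
  | succ n ih =>
    have := h (s + n / q)
    rw [ih] at this
    push_cast
    rw [add_div, ← add_assoc, this]; ring

namespace IsSemi

variable {F H : ℝ → ℝ} {ρ : ℝ}

lemma birkhoff_sub_le (h : IsSemi F H ρ) {g : ℝ → ℝ} {V : ℝ} (hg : MonoDeg g V) {q : ℕ} {p : ℤ}
    (hqp : IsApprox ρ q p) {x y : ℝ} (hxy : H y ≤ H x + 4 / q) :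
    birkhoffSum F g q y - birkhoffSum F g q x ≤ 7 * V := by
  obtain ⟨Θ, hΘ, hΘ1, hΘ2⟩ := h.exists_sandwich hg hqp
  have h1 := (hΘ2 y).2
  have h2 := (hΘ2 x).1
  have h3 := add_nat_div hΘ1 7 (H x - 2 / q)
  have h4 : Θ (H y + 1 / q) ≤ Θ (H x - 2 / q + (7 : ℕ) / q) := hΘ (by
    have : (4 : ℝ) / q + 1 / q = - (2 / q) + (7 : ℕ) / q := by push_cast; ring
    linarith)
  push_cast at h3 h4
  linarith

lemma le_birkhoff_sub (h : IsSemi F H ρ) {g : ℝ → ℝ} {V : ℝ} (hg : MonoDeg g V) {q : ℕ} {p : ℤ}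
    (hqp : IsApprox ρ q p) {x y : ℝ} (hxy : H x + 4 / q ≤ H y) :
    V ≤ birkhoffSum F g q y - birkhoffSum F g q x := by
  obtain ⟨Θ, hΘ, hΘ1, hΘ2⟩ := h.exists_sandwich hg hqp
  have h1 := (hΘ2 y).1
  have h2 := (hΘ2 x).2
  have h3 := hΘ1 (H x + 1 / q)
  have h4 : Θ (H x + 1 / q + 1 / q) ≤ Θ (H y - 2 / q) := hΘ (by
    have : (1 : ℝ) / q + 1 / q = 4 / q - 2 / q := by ring
    linarith)
  linarith

/-- The Birkhoff sums of a monotone function of degree `V` follow an affine function of `H x` which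
depends on `g` only through `V` and an additive constant. -/
lemma exists_affine (h : IsSemi F H ρ) {g : ℝ → ℝ} {V : ℝ} (hg : MonoDeg g V) {q : ℕ} {p : ℤ}
    (hqp : IsApprox ρ q p) :
    ∃ K, ∀ x, |birkhoffSum F g q x - q * V * H x - K| ≤ 3 * V := by
  obtain ⟨Θ, hΘ, hΘ1, hΘ2⟩ := h.exists_sandwich hg hqp
  have hq0 : (0 : ℝ) < q := by exact_mod_cast hqp.pos
  have hV : 0 ≤ V := by
    have := hg.mono (show (0 : ℝ) ≤ 0 + 1 by norm_num)
    rw [hg.add_one] at this; linarith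
  -- compare `Θ` with its values at the points of `(1 / q) ℤ`
  have hint : ∀ n : ℤ, Θ (n / q) = Θ 0 + n * V := by
    intro n
    have := add_int_of_add_one (g := fun t => Θ (t / q)) (V := V)
      (fun t => by simp only [add_div]; exact hΘ1 _) 0 n
    simpa using this
  have hΘ3 : ∀ s, |Θ s - Θ 0 - q * V * s| ≤ V := by
    intro s
    have a1 := Int.floor_le (q * s)
    have a2 := Int.lt_floor_add_one (q * s)
    have b1 : Θ ((⌊q * s⌋ : ℤ) / q) ≤ Θ s := hΘ (by rw [div_le_iff₀ hq0]; linarith)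
    have b2 : Θ s ≤ Θ (((⌊q * s⌋ + 1 : ℤ) : ℝ) / q) :=
      hΘ (by rw [le_div_iff₀ hq0]; push_cast; linarith)
    rw [hint] at b1 b2
    push_cast at b2
    rw [abs_le]
    constructor <;> nlinarith
  refine ⟨Θ 0, fun x => ?_⟩
  have h1 := hΘ2 x
  have h2 := hΘ1 (H x)
  have h3 : Θ (H x) = Θ (H x - 2 / q) + 2 * V := by
    have := add_nat_div hΘ1 2 (H x - 2 / q)
    simpa using this
  have h4 := abs_le.1 (hΘ3 (H x))
  rw [abs_le]
  constructor <;> linarith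

/-- Denjoy–Koksma inequality, in oscillation form, for a difference of monotone functions of the
same degree. -/
lemma denjoy_koksma (h : IsSemi F H ρ) {g₁ g₂ : ℝ → ℝ} {V : ℝ} (hg₁ : MonoDeg g₁ V)
    (hg₂ : MonoDeg g₂ V) {q : ℕ} {p : ℤ} (hqp : IsApprox ρ q p) (x y : ℝ) :
    |birkhoffSum F (g₁ - g₂) q x - birkhoffSum F (g₁ - g₂) q y| ≤ 12 * V := by
  obtain ⟨K₁, h₁⟩ := h.exists_affine hg₁ hqp
  obtain ⟨K₂, h₂⟩ := h.exists_affine hg₂ hqp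
  rw [birkhoffSum_sub, birkhoffSum_sub]
  have a := abs_le.1 (h₁ x)
  have b := abs_le.1 (h₂ x)
  have c := abs_le.1 (h₁ y)
  have d := abs_le.1 (h₂ y)
  rw [abs_le]
  constructor <;> linarith

end IsSemi

/-! ### Denjoy theory -/

/-- The logarithm of the derivative of `F`. Its Birkhoff sums are the logarithms of the derivatives
of the iterates of `F`. -/
def logD (F : ℝ → ℝ) (x : ℝ) : ℝ := Real.log (deriv F x)

/-- The setting of Denjoy's theory: `F` is the lift of a `C¹` circle diffeomorphism with irrational
rotation number `ρ`, semiconjugated to the translation by `H`. The variation of `log F'` is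
controlled by the monotone function `g`, of degree `V`, and `p k / q k` is a sequence of
good rational approximations of `ρ`. -/
structure IsDenjoy (F H g : ℝ → ℝ) (ρ V : ℝ) (q : ℕ → ℕ) (p : ℕ → ℤ) : Prop
    extends IsSemi F H ρ where
  irr : Irrational ρ
  F_diff : ContDiff ℝ 1 F
  F_pos : ∀ x, 0 < deriv F x
  g_deg : MonoDeg g V
  var_le : ∀ a b, a ≤ b → |logD F b - logD F a| ≤ g b - g a
  approx : ∀ k, IsApprox ρ (q k) (p k)
  lim : Tendsto q atTop atTop

lemma monoDeg_id : MonoDeg id 1 := ⟨monotone_id, fun _ => rfl⟩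

lemma uniform_of_add_one {w : ℝ → ℝ} {m : ℝ} (hw : Continuous w) (h : ∀ x, w (x + 1) = w x + m)
    {ε : ℝ} (hε : 0 < ε) : ∃ δ > 0, ∀ x y, |x - y| < δ → |w x - w y| < ε := by
  have h1 : UniformContinuousOn w (Icc (-1) 2) :=
    isCompact_Icc.uniformContinuousOn_of_continuous hw.continuousOn
  obtain ⟨δ, hδ, hδ'⟩ := Metric.uniformContinuousOn_iff.1 h1 ε hε
  refine ⟨min δ 1, by positivity, fun x y hxy => ?_⟩
  have a1 := Int.floor_le x
  have a2 := Int.lt_floor_add_one x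
  have a3 := abs_lt.1 (lt_of_lt_of_le hxy (min_le_right _ _))
  have b1 := add_int_of_add_one h x (-⌊x⌋)
  have b2 := add_int_of_add_one h y (-⌊x⌋)
  push_cast at b1 b2
  have := hδ' (x + -⌊x⌋) ⟨by linarith, by linarith⟩ (y + -⌊x⌋) ⟨by linarith, by linarith⟩
    (by rw [Real.dist_eq, add_sub_add_right_eq_sub]; exact lt_of_lt_of_le hxy (min_le_left _ _))
  rwa [Real.dist_eq, b1, b2, add_sub_add_right_eq_sub] at this

namespace IsDenjoy

variable {F H g : ℝ → ℝ} {ρ V : ℝ} {q : ℕ → ℕ} {p : ℕ → ℤ}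

lemma logD_continuous (h : IsDenjoy F H g ρ V q p) : Continuous (logD F) :=
  (h.F_diff.continuous_deriv le_rfl).log fun x => (h.F_pos x).ne'

lemma logD_add_one (h : IsDenjoy F H g ρ V q p) (x : ℝ) : logD F (x + 1) = logD F x := by
  have := periodic_deriv_of_shift h.F_add x
  simp only [logD, this]

lemma birkhoff_logD_add_one (h : IsDenjoy F H g ρ V q p) (n : ℕ) (x : ℝ) :
    birkhoffSum F (logD F) n (x + 1) = birkhoffSum F (logD F) n x := by
  refine Finset.sum_congr rfl fun i _ => ?_
  rw [iterate_map_add_one h.F_add, h.logD_add_one]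

lemma birkhoff_logD_continuous (h : IsDenjoy F H g ρ V q p) (n : ℕ) :
    Continuous (birkhoffSum F (logD F) n) :=
  continuous_finsetSum _ fun i _ => h.logD_continuous.comp (h.F_cont.iterate i)

lemma hasDerivAt_iterate (h : IsDenjoy F H g ρ V q p) (n : ℕ) (x : ℝ) :
    HasDerivAt (F^[n]) (Real.exp (birkhoffSum F (logD F) n x)) x := by
  induction n with
  | zero => simpa [birkhoffSum_zero] using hasDerivAt_id x
  | succ n ih =>
    have h1 : HasDerivAt F (deriv F (F^[n] x)) (F^[n] x) :=
      (h.F_diff.differentiable one_ne_zero _).hasDerivAt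
    have := h1.comp x ih
    rw [iterate_succ', birkhoffSum_succ, Real.exp_add, mul_comm, logD, Real.exp_log (h.F_pos _)]
    exact this

lemma exists_slope (h : IsDenjoy F H g ρ V q p) (n : ℕ) {a b : ℝ} (hab : a < b) :
    ∃ ξ ∈ Ioo a b, F^[n] b - F^[n] a = Real.exp (birkhoffSum F (logD F) n ξ) * (b - a) := by
  obtain ⟨ξ, hξ, hh⟩ := exists_hasDerivAt_eq_slope (F^[n]) _ hab (h.F_cont.iterate n).continuousOn
    fun x _ => h.hasDerivAt_iterate n x
  refine ⟨ξ, hξ, ?_⟩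
  rw [hh, div_mul_cancel₀ _ (sub_pos.2 hab).ne']

/-- Denjoy's inequality: the derivatives of the iterates `F^[q k]` are bounded above and below. -/
lemma denjoy_ineq (h : IsDenjoy F H g ρ V q p) (k : ℕ) (x : ℝ) :
    |birkhoffSum F (logD F) (q k) x| ≤ 12 * V := by
  have hg₂ : MonoDeg (g - logD F) V := by
    refine ⟨fun a b hab => ?_, fun y => ?_⟩
    · have := (abs_le.1 (h.var_le a b hab)).2
      simp only [Pi.sub_apply]; linarith
    · simp only [Pi.sub_apply, h.g_deg.add_one, h.logD_add_one]; ring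
  -- `F^[q k]` has degree one, so its derivative takes the value `1`
  obtain ⟨ξ, -, hξ⟩ := h.exists_slope (q k) (zero_lt_one' ℝ)
  have h0 : birkhoffSum F (logD F) (q k) ξ = 0 := by
    have e := iterate_map_add_one h.F_add (q k) 0
    rw [zero_add] at e
    rw [e, add_sub_cancel_left, sub_zero, mul_one] at hξ
    exact Real.exp_eq_one_iff _ |>.1 hξ.symm
  have := h.denjoy_koksma h.g_deg hg₂ (h.approx k) x ξ
  rw [sub_sub_cancel] at this
  rwa [h0, sub_zero] at this

/-- Bounded distortion of the first `q k` iterates on intervals of `H`-length `4 / q k`. -/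
lemma distortion (h : IsDenjoy F H g ρ V q p) (k : ℕ) {j : ℕ} (hj : j ≤ q k) {z y : ℝ} (hzy : z < y)
    (hH : H y ≤ H z + 4 / q k) :
    Real.exp (birkhoffSum F (logD F) j z) * (y - z) ≤ Real.exp (7 * V) * (F^[j] y - F^[j] z) := by
  obtain ⟨ξ, hξ, e⟩ := h.exists_slope j hzy
  rw [e, ← mul_assoc, ← Real.exp_add]
  refine mul_le_mul_of_nonneg_right (Real.exp_le_exp.2 ?_) (sub_pos.2 hzy).le
  have h1 : birkhoffSum F (logD F) j z - birkhoffSum F (logD F) j ξ ≤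
      birkhoffSum F g (q k) ξ - birkhoffSum F g (q k) z := by
    simp only [birkhoffSum]
    rw [← Finset.sum_sub_distrib, ← Finset.sum_sub_distrib]
    have hnn : ∀ i, |logD F (F^[i] ξ) - logD F (F^[i] z)| ≤ g (F^[i] ξ) - g (F^[i] z) :=
      fun i => h.var_le _ _ ((h.F_mono.iterate i).monotone hξ.1.le)
    refine le_trans (Finset.sum_le_sum (g := fun i => g (F^[i] ξ) - g (F^[i] z)) fun i _ => ?_)
      (Finset.sum_le_sum_of_subset_of_nonneg
        (fun i hi => Finset.mem_range.2 (lt_of_lt_of_le (Finset.mem_range.1 hi) hj))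
        fun i _ _ => (abs_nonneg _).trans (hnn i))
    have := (abs_le.1 (hnn i)).1
    linarith
  have h2 := h.birkhoff_sub_le h.g_deg (h.approx k) (x := z) (y := ξ)
    ((h.H_deg.mono hξ.2.le).trans hH)
  linarith

/-- Denjoy's theorem: there are no wandering intervals. The images of an interval collapsed by `H`
have bounded total length, whereas the images under `F^[q k]` have length bounded below. -/
lemma H_strictMono (h : IsDenjoy F H g ρ V q p) : StrictMono H := by
  refine h.H_deg.mono.strictMono_of_injective fun a b hab => ?_
  by_contra hne
  wlog hlt : a < b generalizing a b
  · exact this b a hab.symm (Ne.symm hne) (lt_of_le_of_ne (not_lt.1 hlt) (Ne.symm hne))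
  have hnn : ∀ i, 0 ≤ F^[i] b - F^[i] a := fun i =>
    sub_nonneg.2 ((h.F_mono.iterate i).monotone hlt.le)
  have hsum : Summable fun i => F^[i] b - F^[i] a := by
    refine summable_of_sum_range_le (c := 7) hnn fun n => ?_
    obtain ⟨k, hk⟩ := (h.lim.eventually_ge_atTop n).exists
    have := h.birkhoff_sub_le monoDeg_id (h.approx k) (x := a) (y := b)
      (by rw [hab]; have : (0 : ℝ) ≤ 4 / q k := by positivity
          linarith)
    simp only [birkhoffSum, id, ← Finset.sum_sub_distrib] at this
    refine le_trans (Finset.sum_le_sum_of_subset_of_nonneg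
      (fun i hi => Finset.mem_range.2 (lt_of_lt_of_le (Finset.mem_range.1 hi) hk))
      fun i _ _ => hnn i) (by linarith)
  have h0 := hsum.tendsto_atTop_zero.comp h.lim
  have hpos : 0 < Real.exp (-(12 * V)) * (b - a) := mul_pos (Real.exp_pos _) (sub_pos.2 hlt)
  obtain ⟨k, hk⟩ := (h0.eventually_lt_const hpos).exists
  obtain ⟨ξ, -, e⟩ := h.exists_slope (q k) hlt
  simp only [comp_apply] at hk
  rw [e] at hk
  have := mul_le_mul_of_nonneg_right
    (Real.exp_le_exp.2 (abs_le.1 (h.denjoy_ineq k ξ)).1) (sub_pos.2 hlt).le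
  linarith

lemma F_surjective (h : IsDenjoy F H g ρ V q p) : Surjective F := by
  intro y
  obtain ⟨n, hn⟩ := exists_int_gt (y - F 0)
  obtain ⟨m, hm⟩ := exists_int_lt (y - F 0)
  have e1 := h.F_iterate_add_int 1 0 n
  have e2 := h.F_iterate_add_int 1 0 m
  simp only [iterate_one, zero_add] at e1 e2
  exact mem_range_of_exists_le_of_exists_ge h.F_cont ⟨m, by linarith⟩ ⟨n, by linarith⟩

lemma H_continuous (h : IsDenjoy F H g ρ V q p) : Continuous H := by
  refine h.H_deg.mono.continuous_of_denseRange ?_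
  let K : AddSubgroup ℝ :=
    { carrier := {t | (∀ x, ∃ y, H y = H x + t) ∧ ∀ x, ∃ y, H y = H x - t}
      zero_mem' := ⟨fun x => ⟨x, by simp⟩, fun x => ⟨x, by simp⟩⟩
      add_mem' := by
        rintro s t ⟨hs, hs'⟩ ⟨ht, ht'⟩
        refine ⟨fun x => ?_, fun x => ?_⟩
        · obtain ⟨y, hy⟩ := hs x
          obtain ⟨z, hz⟩ := ht y
          exact ⟨z, by rw [hz, hy]; ring⟩
        · obtain ⟨y, hy⟩ := hs' x
          obtain ⟨z, hz⟩ := ht' y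
          exact ⟨z, by rw [hz, hy]; ring⟩
      neg_mem' := by
        rintro s ⟨hs, hs'⟩
        exact ⟨fun x => by simpa [← sub_eq_add_neg] using hs' x, fun x => by simpa using hs x⟩ }
  have hK : AddSubgroup.closure {ρ, 1} ≤ K := by
    rw [AddSubgroup.closure_le]
    rintro t (rfl | rfl)
    · refine ⟨fun x => ⟨F x, h.semi x⟩, fun x => ?_⟩
      obtain ⟨y, rfl⟩ := h.F_surjective x
      exact ⟨y, by rw [h.semi]; ring⟩
    · refine ⟨fun x => ⟨x + 1, h.H_deg.add_one x⟩, fun x => ⟨x + (-1 : ℤ), ?_⟩⟩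
      rw [h.H_add_int]; push_cast; ring
  have hd : Dense (AddSubgroup.closure {ρ, 1} : Set ℝ) :=
    dense_addSubgroupClosure_pair_iff.2 (by simpa using h.irr)
  have hd' := (Homeomorph.addLeft (H 0)).surjective.denseRange.dense_image
    (Homeomorph.addLeft (H 0)).continuous hd
  refine hd'.mono ?_
  rintro _ ⟨t, ht, rfl⟩
  obtain ⟨y, hy⟩ := (hK ht).1 0
  exact ⟨y, hy⟩

lemma exists_H_eq (h : IsDenjoy F H g ρ V q p) (s : ℝ) : ∃ x, H x = s := by
  obtain ⟨a, ha⟩ := h.exists_lt_H s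
  obtain ⟨b, hb⟩ := h.exists_H_lt s
  exact mem_range_of_exists_le_of_exists_ge h.H_continuous ⟨b, hb.le⟩ ⟨a, ha.le⟩

/-- `H⁻¹` is uniformly continuous. -/
lemma exists_H_modulus (h : IsDenjoy F H g ρ V q p) {ε : ℝ} (hε : 0 < ε) :
    ∃ δ > 0, ∀ a b, H b < H a + δ → b < a + ε := by
  obtain ⟨x₀, -, hx₀⟩ := isCompact_Icc.exists_isMinOn (nonempty_Icc.2 (zero_le_one' ℝ))
    (f := fun x => H (x + ε) - H x)
    ((h.H_continuous.comp (continuous_id.add continuous_const)).sub h.H_continuous).continuousOn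
  refine ⟨H (x₀ + ε) - H x₀, sub_pos.2 (h.H_strictMono (by linarith)), fun a b hab => ?_⟩
  have a1 := Int.floor_le a
  have a2 := Int.lt_floor_add_one a
  have h1 := hx₀ (show a + ((-⌊a⌋ : ℤ) : ℝ) ∈ Icc (0 : ℝ) 1 by
    push_cast; exact ⟨by linarith, by linarith⟩)
  simp only [mem_ofPred_eq] at h1
  rw [add_right_comm a _ ε, h.H_add_int, h.H_add_int] at h1
  exact h.lt_of_H_lt (by linarith)

lemma eventually_div_lt (h : IsDenjoy F H g ρ V q p) (C : ℝ) {δ : ℝ} (hδ : 0 < δ) :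
    ∀ᶠ k in atTop, C / (q k : ℝ) < δ :=
  ((tendsto_natCast_atTop_atTop.comp h.lim).const_div_atTop C).eventually_lt_const hδ

/-- The iterates `F^[q k]` converge to the identity modulo integers. -/
lemma near_id (h : IsDenjoy F H g ρ V q p) {ε : ℝ} (hε : 0 < ε) :
    ∀ᶠ k in atTop, ∀ x, |F^[q k] x - p k - x| < ε := by
  obtain ⟨δ, hδ, hδ'⟩ := h.exists_H_modulus hε
  filter_upwards [h.eventually_div_lt 1 hδ] with k hk x
  have e : H (F^[q k] x - p k) = H x + (q k * ρ - p k) := by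
    have := h.H_add_int (F^[q k] x) (-p k)
    push_cast at this
    rw [sub_eq_add_neg, this, h.H_iterate]; ring
  have hc := abs_le.1 (h.approx k).close
  have h1 := hδ' x (F^[q k] x - p k) (by rw [e]; linarith)
  have h2 := hδ' (F^[q k] x - p k) x (by rw [e]; linarith)
  rw [abs_lt]
  constructor <;> linarith

end IsDenjoy

/-! ### Densities modulo coboundaries -/

/-- `AsympOsc F q u B`: the oscillation over the line of the Birkhoff sums of `u` of length `q k` is
asymptotically at most `B`. -/
def AsympOsc (F : ℝ → ℝ) (q : ℕ → ℕ) (u : ℝ → ℝ) (B : ℝ) : Prop :=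
  ∀ ε > 0, ∀ᶠ k in atTop, ∀ x y,
    |birkhoffSum F u (q k) x - birkhoffSum F u (q k) y| ≤ B + ε

namespace AsympOsc

variable {F : ℝ → ℝ} {q : ℕ → ℕ} {u v : ℝ → ℝ} {A B : ℝ}

lemma add (hu : AsympOsc F q u A) (hv : AsympOsc F q v B) : AsympOsc F q (u + v) (A + B) := by
  intro ε hε
  filter_upwards [hu (ε / 2) (by positivity), hv (ε / 2) (by positivity)] with k h1 h2 x y
  have h1 := abs_le.1 (h1 x y)
  have h2 := abs_le.1 (h2 x y)
  rw [birkhoffSum_add', birkhoffSum_add', abs_le]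
  constructor <;> linarith

lemma neg (hu : AsympOsc F q u A) : AsympOsc F q (-u) A := by
  intro ε hε
  filter_upwards [hu ε hε] with k h1 x y
  rw [birkhoffSum_neg, birkhoffSum_neg, ← abs_neg]
  convert h1 x y using 2
  ring

lemma zero : AsympOsc F q 0 0 := by
  intro ε hε
  refine Eventually.of_forall fun k x y => ?_
  simp [birkhoffSum, hε.le]

end AsympOsc

/-- A `C¹` function `w` with positive derivative `v` and degree `m`: the primitive of a continuous
positive density of mass `m` on the circle. -/
structure PosDensity (w v : ℝ → ℝ) (m : ℝ) : Prop where
  deriv_at : ∀ x, HasDerivAt w (v x) x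
  cont : Continuous v
  pos : ∀ x, 0 < v x
  add_one : ∀ x, w (x + 1) = w x + m

namespace PosDensity

variable {w v : ℝ → ℝ} {m : ℝ}

lemma monoDeg (h : PosDensity w v m) : MonoDeg w m := by
  refine ⟨(strictMono_of_deriv_pos fun x => ?_).monotone, h.add_one⟩
  rw [(h.deriv_at x).deriv]; exact h.pos x

lemma continuous (h : PosDensity w v m) : Continuous w :=
  continuous_iff_continuousAt.2 fun x => (h.deriv_at x).continuousAt

lemma exists_slope (h : PosDensity w v m) {a b : ℝ} (hab : a < b) :
    ∃ ξ ∈ Ioo a b, w b - w a = v ξ * (b - a) := by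
  obtain ⟨ξ, hξ, hh⟩ := exists_hasDerivAt_eq_slope w v hab h.continuous.continuousOn
    fun x _ => h.deriv_at x
  refine ⟨ξ, hξ, ?_⟩
  rw [hh, div_mul_cancel₀ _ (sub_pos.2 hab).ne']

lemma mass_pos (h : PosDensity w v m) : 0 < m := by
  obtain ⟨ξ, -, hξ⟩ := h.exists_slope (zero_lt_one' ℝ)
  have e := h.add_one 0
  rw [zero_add] at e
  rw [e] at hξ
  have := h.pos ξ
  linarith

lemma density_add_one (h : PosDensity w v m) (x : ℝ) : v (x + 1) = v x := by
  have h1 := (h.deriv_at (x + 1)).comp_add_const x 1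
  have h2 := (h.deriv_at x).add_const m
  have e : (fun y => w (y + 1)) = fun y => w y + m := funext h.add_one
  rw [e] at h1
  exact h1.unique h2

/-- A continuous positive density is nearly constant at small scales. -/
lemma exists_half (h : PosDensity w v m) : ∃ δ > 0, ∀ x y, |x - y| < δ → v y ≤ 2 * v x := by
  obtain ⟨x₀, -, hx₀⟩ := isCompact_Icc.exists_isMinOn (nonempty_Icc.2 (zero_le_one' ℝ))
    h.cont.continuousOn
  have hmin : ∀ x, v x₀ ≤ v x := by
    intro x
    have e := add_int_of_add_one (g := v) (V := 0) (by simpa using h.density_add_one) x (-⌊x⌋)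
    have a1 := Int.floor_le x
    have a2 := Int.lt_floor_add_one x
    have := hx₀ (show x + ((-⌊x⌋ : ℤ) : ℝ) ∈ Icc (0 : ℝ) 1 by
      push_cast; exact ⟨by linarith, by linarith⟩)
    simp only [mem_ofPred_eq] at this
    rw [e] at this
    linarith
  obtain ⟨δ, hδ, hδ'⟩ := uniform_of_add_one h.cont (m := 0) (by simpa using h.density_add_one)
    (h.pos x₀)
  refine ⟨δ, hδ, fun x y hxy => ?_⟩
  have := abs_lt.1 (hδ' x y hxy)
  have := hmin x
  linarith

end PosDensity

lemma exists_primitive {φ : ℝ → ℝ} (hφ : Continuous φ) (h : ∀ x, φ (x + 1) = φ x) :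
    ∃ P : ℝ → ℝ, ∃ m : ℝ, (∀ x, HasDerivAt P (φ x) x) ∧ ∀ x, P (x + 1) = P x + m := by
  have hint : ∀ a b, IntervalIntegrable φ volume a b := fun a b => hφ.intervalIntegrable a b
  refine ⟨fun x => ∫ t in (0 : ℝ)..x, φ t, ∫ t in (0 : ℝ)..1, φ t, fun x => ?_, fun x => ?_⟩
  · exact intervalIntegral.integral_hasDerivAt_right (hint _ _)
      (hφ.stronglyMeasurableAtFilter _ _) hφ.continuousAt
  · have e : Function.Periodic φ 1 := h
    have := e.intervalIntegral_add_eq x 0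
    rw [zero_add] at this
    rw [← this, intervalIntegral.integral_add_adjacent_intervals (hint _ _) (hint _ _)]

namespace IsDenjoy

variable {F H g : ℝ → ℝ} {ρ V : ℝ} {q : ℕ → ℕ} {p : ℕ → ℤ}

/-- Coboundaries are negligible, the transfer function being allowed a nonzero degree. -/
lemma asympOsc_coboundary (h : IsDenjoy F H g ρ V q p) {w : ℝ → ℝ} {m : ℝ} (hw : Continuous w)
    (hm : ∀ x, w (x + 1) = w x + m) (j : ℕ) : AsympOsc F q (w ∘ F^[j] - w) 0 := by
  induction j with
  | zero => simpa using AsympOsc.zero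
  | succ j ih =>
    have key : AsympOsc F q (w ∘ F^[j] ∘ F - w ∘ F^[j]) 0 := by
      intro ε hε
      have hw' : Continuous (w ∘ F^[j]) := hw.comp (h.F_cont.iterate j)
      have hm' : ∀ x, (w ∘ F^[j]) (x + 1) = (w ∘ F^[j]) x + m := fun x => by
        simp only [comp_apply, iterate_map_add_one h.F_add, hm]
      obtain ⟨δ, hδ, hδ'⟩ := uniform_of_add_one hw' hm' (half_pos hε)
      filter_upwards [h.near_id hδ] with k hk
      have hx : ∀ x, |birkhoffSum F (w ∘ F^[j] ∘ F - w ∘ F^[j]) (q k) x - p k * m| < ε / 2 := by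
        intro x
        have e1 := birkhoffSum_apply_sub_birkhoffSum F (w ∘ F^[j]) (q k) x
        have e2 : birkhoffSum F (w ∘ F^[j] ∘ F) (q k) x
            = birkhoffSum F (w ∘ F^[j]) (q k) (F x) := by
          simp only [birkhoffSum, comp_apply, ← iterate_succ_apply' F, iterate_succ_apply]
        rw [birkhoffSum_sub, e2, e1]
        have e3 := add_int_of_add_one hm' (F^[q k] x - p k) (p k)
        rw [sub_add_cancel] at e3
        rw [e3]
        convert hδ' _ _ (hk x) using 2
        ring
      intro x y
      have := abs_lt.1 (hx x)
      have := abs_lt.1 (hx y)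
      rw [abs_le]
      constructor <;> linarith
    have := key.add ih
    rw [zero_add, sub_add_sub_cancel] at this
    rwa [iterate_succ]

/-- The minorization step: modulo coboundaries, a positive density of mass `m` can be replaced by
one which is bounded below by `c m`, with `c` depending only on `F`. Each mass at a point `z` is
spread over the orbit segment `z, …, F^[n - 1] z`, `n = q k`, proportionally to the derivatives of
the iterates, and the result is transported by `F^[n]⁻¹`. -/
lemma minorization (h : IsDenjoy F H g ρ V q p) :
    ∃ c : ℝ, 0 < c ∧ c < 1 ∧ ∀ w v m, PosDensity w v m →
      ∃ w' v', PosDensity (fun x => w' x - c * m * x) v' ((1 - c) * m) ∧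
        AsympOsc F q (w' - w) 0 := by
  have hV : 0 ≤ V := by
    have := h.g_deg.mono (show (0 : ℝ) ≤ 0 + 1 by norm_num)
    rw [h.g_deg.add_one] at this; linarith
  refine ⟨Real.exp (-(19 * V)) / 28, by positivity, ?_, fun w v m hw => ?_⟩
  · have : Real.exp (-(19 * V)) ≤ 1 := Real.exp_le_one_iff.2 (by linarith)
    linarith
  set c := Real.exp (-(19 * V)) / 28 with hc
  obtain ⟨δ, hδ, hδ'⟩ := hw.exists_half
  obtain ⟨η, hη, hη'⟩ := h.exists_H_modulus hδ
  obtain ⟨k, hk⟩ := (h.eventually_div_lt 4 hη).exists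
  set n := q k with hn
  have hn0 : (0 : ℝ) < n := by exact_mod_cast (h.approx k).pos
  let J : ℕ → ℝ → ℝ := fun j x => Real.exp (birkhoffSum F (logD F) j x)
  have hJpos : ∀ j x, 0 < J j x := fun j x => Real.exp_pos _
  have hJcont : ∀ j, Continuous (J j) := fun j => (h.birkhoff_logD_continuous j).rexp
  have hJadd : ∀ j x, J j (x + 1) = J j x := fun j x => by
    simp only [J, h.birkhoff_logD_add_one]
  have hJmul : ∀ i j x, J (i + j) x = J i x * J j (F^[i] x) := fun i j x => by
    simp only [J, birkhoffSum_add, Real.exp_add]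
  let D : ℝ → ℝ := fun x => ∑ j ∈ Finset.range n, J j x
  have hDpos : ∀ x, 0 < D x := fun x =>
    Finset.sum_pos (fun j _ => hJpos j x) (Finset.nonempty_range_iff.2 (h.approx k).pos.ne')
  let r : ℝ → ℝ := fun x => v x / D x
  have hrpos : ∀ x, 0 < r x := fun x => div_pos (hw.pos x) (hDpos x)
  have hrcont : Continuous r :=
    hw.cont.div (continuous_finsetSum _ fun j _ => hJcont j) fun x => (hDpos x).ne'
  have hradd : ∀ x, r (x + 1) = r x := fun x => by
    simp only [r, D, hJadd, hw.density_add_one]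
  -- `v = ∑ j < n, r * J j`; `P j` is a primitive of the `j`-th piece
  have hprim := fun j : ℕ => exists_primitive (φ := fun x => r x * J j x) (hrcont.mul (hJcont j))
    fun x => by simp only [hradd, hJadd]
  choose P M hP hM using hprim
  have hPcont : ∀ j, Continuous (P j) := fun j =>
    continuous_iff_continuousAt.2 fun x => (hP j x).continuousAt
  let w' : ℝ → ℝ := w + ∑ j ∈ Finset.range n, (P j ∘ F^[n - j] - P j)
  have hw'deriv : ∀ x, HasDerivAt w' (J n x * ∑ i ∈ Finset.range n, r (F^[i] (F x))) x := by
    intro x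
    have h1 : HasDerivAt w' (v x + ∑ j ∈ Finset.range n,
        (r (F^[n - j] x) * J j (F^[n - j] x) * J (n - j) x - r x * J j x)) x := by
      refine (hw.deriv_at x).add (HasDerivAt.sum fun j _ => ?_)
      exact ((hP j _).comp x (h.hasDerivAt_iterate _ x)).sub (hP j x)
    convert h1 using 1
    rw [Finset.sum_sub_distrib, ← Finset.mul_sum]
    have e1 : r x * ∑ j ∈ Finset.range n, J j x = v x := div_mul_cancel₀ _ (hDpos x).ne'
    rw [e1, add_sub_cancel, ← Finset.sum_range_reflect, Finset.mul_sum]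
    refine Finset.sum_congr rfl fun j hj => ?_
    have hj' := Finset.mem_range.1 hj
    have e2 : n - 1 - j + 1 = n - j := by omega
    rw [← iterate_succ_apply F, Nat.succ_eq_add_one, e2]
    have e3 := hJmul (n - j) j x
    rw [Nat.sub_add_cancel hj'.le] at e3
    rw [e3]; ring
  have hw'add : ∀ x, w' (x + 1) = w' x + m := by
    intro x
    simp only [w', Pi.add_apply, Finset.sum_apply, Pi.sub_apply, comp_apply,
      iterate_map_add_one h.F_add, hM, hw.add_one, add_sub_add_right_eq_sub]
    ring
  have hw'osc : AsympOsc F q (w' - w) 0 := by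
    simp only [w', add_sub_cancel_left]
    refine Finset.sum_induction _ (fun u => AsympOsc F q u 0) (fun a b ha hb => ?_)
      AsympOsc.zero fun j _ => h.asympOsc_coboundary (hPcont j) (hM j) _
    simpa using ha.add hb
  -- the lower bound for the new density
  have hlow : ∀ x, c * m < J n x * ∑ i ∈ Finset.range n, r (F^[i] (F x)) := by
    intro x
    obtain ⟨y, hy⟩ := h.exists_H_eq (H (F x) + 4 / n)
    have hFy : ∀ i, H (F^[i] y) = H (F^[i] (F x)) + 4 / n := fun i => by
      rw [h.H_iterate, h.H_iterate, hy]; ring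
    have h4 : (0 : ℝ) < 4 / n := by positivity
    have hterm : ∀ i, w (F^[i] y) - w (F^[i] (F x)) ≤
        14 * Real.exp (7 * V) * r (F^[i] (F x)) := by
      intro i
      have hz := hFy i
      generalize F^[i] (F x) = z at hz ⊢
      generalize F^[i] y = t at hz ⊢
      have hzt : z < t := h.lt_of_H_lt (by linarith)
      have htz : t < z + δ := hη' z t (by linarith)
      have hD : D z * (t - z) ≤ 7 * Real.exp (7 * V) := by
        have b := h.birkhoff_sub_le monoDeg_id (h.approx k) (x := z) (y := t) hz.le
        simp only [birkhoffSum, id, ← Finset.sum_sub_distrib, mul_one] at b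
        simp only [D]
        rw [Finset.sum_mul]
        calc _ ≤ ∑ j ∈ Finset.range n, Real.exp (7 * V) * (F^[j] t - F^[j] z) :=
              Finset.sum_le_sum fun j hj =>
                h.distortion k (Finset.mem_range.1 hj).le hzt hz.le
          _ ≤ 7 * Real.exp (7 * V) := by
              rw [← Finset.mul_sum, mul_comm]
              exact mul_le_mul_of_nonneg_right b (Real.exp_pos _).le
      obtain ⟨ξ, hξ, e⟩ := hw.exists_slope hzt
      have hv : v ξ ≤ 2 * v z := hδ' z ξ (by
        rw [abs_lt]; constructor <;> linarith [hξ.1, hξ.2])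
      have hvr : v z = r z * D z := (div_mul_cancel₀ _ (hDpos z).ne').symm
      calc w t - w z = v ξ * (t - z) := e
        _ ≤ 2 * v z * (t - z) := mul_le_mul_of_nonneg_right hv (sub_pos.2 hzt).le
        _ = 2 * r z * (D z * (t - z)) := by rw [hvr]; ring
        _ ≤ 2 * r z * (7 * Real.exp (7 * V)) :=
            mul_le_mul_of_nonneg_left hD (by have := hrpos z; positivity)
        _ = 14 * Real.exp (7 * V) * r z := by ring
    have hsum : m ≤ 14 * Real.exp (7 * V) * ∑ i ∈ Finset.range n, r (F^[i] (F x)) := by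
      refine (h.le_birkhoff_sub hw.monoDeg (h.approx k) (x := F x) (y := y) hy.ge).trans ?_
      simp only [birkhoffSum]
      rw [← Finset.sum_sub_distrib, Finset.mul_sum]
      exact Finset.sum_le_sum fun i _ => hterm i
    have hJ : Real.exp (-(12 * V)) ≤ J n x :=
      Real.exp_le_exp.2 (abs_le.1 (h.denjoy_ineq k x)).1
    have hm := hw.mass_pos
    set T := ∑ i ∈ Finset.range n, r (F^[i] (F x)) with hT
    have hT0 : 0 ≤ T := Finset.sum_nonneg fun i _ => (hrpos _).le
    have e19 : Real.exp (-(19 * V)) * Real.exp (7 * V) = Real.exp (-(12 * V)) := by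
      rw [← Real.exp_add]; congr 1; ring
    have hE : 0 < Real.exp (-(19 * V)) := Real.exp_pos _
    calc c * m < Real.exp (-(19 * V)) / 14 * m :=
          mul_lt_mul_of_pos_right (by rw [hc]; linarith) hm
      _ ≤ Real.exp (-(19 * V)) / 14 * (14 * Real.exp (7 * V) * T) :=
          mul_le_mul_of_nonneg_left hsum (by positivity)
      _ = Real.exp (-(12 * V)) * T := by rw [← e19]; ring
      _ ≤ J n x * T := mul_le_mul_of_nonneg_right hJ hT0
  refine ⟨w', fun x => J n x * ∑ i ∈ Finset.range n, r (F^[i] (F x)) - c * m,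
    ⟨fun x => ?_, ?_, fun x => sub_pos.2 (hlow x), fun x => ?_⟩, hw'osc⟩
  · have := (hw'deriv x).sub ((hasDerivAt_id x).const_mul (c * m))
    rw [mul_one] at this
    exact this
  · refine Continuous.sub ((hJcont n).mul ?_) continuous_const
    exact continuous_finsetSum _ fun i _ => hrcont.comp ((h.F_cont.iterate i).comp h.F_cont)
  · simp only [hw'add]; ring

/-- Two positive densities of the same mass are cohomologous up to an error whose total variation
is arbitrarily small: iterate the minorization step, which leaves a fraction `1 - c` of the mass. -/
lemma asympOsc_sub (h : IsDenjoy F H g ρ V q p) :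
    ∃ c : ℝ, 0 < c ∧ c < 1 ∧ ∀ (n : ℕ) w₁ v₁ w₂ v₂ m, PosDensity w₁ v₁ m → PosDensity w₂ v₂ m →
      AsympOsc F q (w₁ - w₂) (12 * ((1 - c) ^ n * m)) := by
  obtain ⟨c, hc0, hc1, hc⟩ := h.minorization
  refine ⟨c, hc0, hc1, fun n => ?_⟩
  induction n with
  | zero =>
    intro w₁ v₁ w₂ v₂ m h₁ h₂ ε hε
    refine Eventually.of_forall fun k x y => ?_
    have := h.denjoy_koksma h₁.monoDeg h₂.monoDeg (h.approx k) x y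
    rw [pow_zero, one_mul]
    linarith
  | succ n ih =>
    intro w₁ v₁ w₂ v₂ m h₁ h₂
    obtain ⟨a₁, b₁, hab₁, o₁⟩ := hc _ _ _ h₁
    obtain ⟨a₂, b₂, hab₂, o₂⟩ := hc _ _ _ h₂
    have := ((ih _ _ _ _ _ hab₁ hab₂).add o₂).add o₁.neg
    convert this using 1
    · funext x
      simp only [Pi.add_apply, Pi.sub_apply, Pi.neg_apply]; ring
    · ring

/-- The Birkhoff sums of length `q k` of a `C¹` periodic function have vanishing oscillation. -/
lemma asympOsc_zero (h : IsDenjoy F H g ρ V q p) {u : ℝ → ℝ} (hu : ContDiff ℝ 1 u)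
    (hper : Function.Periodic u 1) : AsympOsc F q u 0 := by
  obtain ⟨c, hc0, hc1, hc⟩ := h.asympOsc_sub
  have hcont : Continuous (deriv u) := hu.continuous_deriv le_rfl
  obtain ⟨K, hK⟩ := isCompact_Icc.exists_bound_of_continuousOn (s := Icc (0 : ℝ) 1)
    hcont.continuousOn
  have hK' : ∀ x, |deriv u x| ≤ K := by
    intro x
    have e := add_int_of_add_one (g := deriv u) (V := 0) (by simpa using hper.deriv') x (-⌊x⌋)
    have a1 := Int.floor_le x
    have a2 := Int.lt_floor_add_one x
    have := hK (x + ((-⌊x⌋ : ℤ) : ℝ)) (by push_cast; exact ⟨by linarith, by linarith⟩)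
    rw [e] at this
    simpa using this
  have hK0 : 0 ≤ K := (abs_nonneg _).trans (hK' 0)
  have h₁ : PosDensity (fun x => u x + (K + 1) * x) (fun x => deriv u x + (K + 1)) (K + 1) := by
    refine ⟨fun x => ?_, hcont.add continuous_const, fun x => ?_, fun x => ?_⟩
    · have := ((hu.differentiable one_ne_zero x).hasDerivAt).add
        ((hasDerivAt_id x).const_mul (K + 1))
      rw [mul_one] at this
      exact this
    · have := (abs_le.1 (hK' x)).1
      linarith
    · simp only [hper x]; ring
  have h₂ : PosDensity (fun x => (K + 1) * x) (fun _ => K + 1) (K + 1) := by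
    refine ⟨fun x => ?_, continuous_const, fun x => by positivity, fun x => by ring⟩
    simpa using (hasDerivAt_id x).const_mul (K + 1)
  intro ε hε
  have hlim : Tendsto (fun n : ℕ => 12 * ((1 - c) ^ n * (K + 1))) atTop (𝓝 0) := by
    have := ((tendsto_pow_atTop_nhds_zero_of_lt_one (r := 1 - c) (by linarith)
      (by linarith)).mul_const (K + 1)).const_mul 12
    simpa using this
  obtain ⟨n, hn⟩ := (hlim.eventually_lt_const (half_pos hε)).exists
  have := hc n _ _ _ _ _ h₁ h₂
  have e : ((fun x => u x + (K + 1) * x) - fun x => (K + 1) * x) = u := by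
    funext x; simp
  rw [e] at this
  filter_upwards [this (ε / 2) (half_pos hε)] with k hk x y
  have := hk x y
  linarith

end IsDenjoy

/-! ### Convergents of an irrational number -/

section Convergents

variable {ρ : ℝ}

lemma of_not_terminatedAt (hρ : Irrational ρ) (n : ℕ) : ¬ (GenContFract.of ρ).TerminatedAt n := by
  intro h
  obtain ⟨r, hr⟩ := (GenContFract.terminates_iff_rat ρ).1 ⟨n, h⟩
  exact hρ ⟨r, hr.symm⟩

/-- The numerators and denominators of the convergents are integers. -/
lemma exists_int_conts (hρ : Irrational ρ) (n : ℕ) :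
    ∃ a b : ℤ, (GenContFract.of ρ).contsAux n = ⟨a, b⟩ := by
  induction n using Nat.strong_induction_on with
  | _ n ih =>
    match n with
    | 0 => exact ⟨1, 0, by simp [GenContFract.contsAux]⟩
    | 1 => exact ⟨⌊ρ⌋, 1, by simp [GenContFract.contsAux]⟩
    | n + 2 =>
      obtain ⟨gp, hgp⟩ := Option.ne_none_iff_exists'.1 (of_not_terminatedAt hρ n)
      obtain ⟨ha, z, hz⟩ := GenContFract.of_partNum_eq_one_and_exists_int_partDen_eq hgp
      obtain ⟨a, b, h0⟩ := ih n (by omega)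
      obtain ⟨a', b', h1⟩ := ih (n + 1) (by omega)
      refine ⟨z * a' + a, z * b' + b, ?_⟩
      rw [GenContFract.contsAux_recurrence hgp h0 h1, ha, hz]
      push_cast
      simp

lemma exists_isApprox (hρ : Irrational ρ) {q : ℕ → ℕ}
    (hq : ∀ k, (q k : ℝ) = (GenContFract.of ρ).dens k) : ∃ p : ℕ → ℤ, ∀ k, IsApprox ρ (q k) (p k) := by
  have hnum : ∀ k, ∃ p : ℤ, (GenContFract.of ρ).nums k = p := fun k => by
    obtain ⟨a, b, h⟩ := exists_int_conts hρ (k + 1)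
    exact ⟨a, by rw [GenContFract.num_eq_conts_a, GenContFract.nth_cont_eq_succ_nth_contAux, h]⟩
  choose p hp using hnum
  have hpos : ∀ k, 0 < q k := fun k => by
    have h1 := GenContFract.succ_nth_fib_le_of_nth_den (v := ρ) (n := k)
      (Or.inr (of_not_terminatedAt hρ _))
    rw [← hq] at h1
    exact (Nat.fib_pos.2 k.succ_pos).trans_le (by exact_mod_cast h1)
  refine ⟨p, fun k => ⟨hpos k, ?_, ?_⟩⟩
  · have hd := SimpContFract.determinant (s := SimpContFract.of ρ) (n := k)
      (of_not_terminatedAt hρ k)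
    change (GenContFract.of ρ).nums k * (GenContFract.of ρ).dens (k + 1)
      - (GenContFract.of ρ).dens k * (GenContFract.of ρ).nums (k + 1) = _ at hd
    rw [hp, hp, ← hq, ← hq] at hd
    have hd' : p k * (q (k + 1) : ℤ) - q k * p (k + 1) = (-1) ^ (k + 1) := by exact_mod_cast hd
    refine ⟨(-1) ^ (k + 1) * q (k + 1), -((-1) ^ (k + 1) * p (k + 1)), ?_⟩
    have e : ((-1 : ℤ) ^ (k + 1)) * (-1) ^ (k + 1) = 1 := by
      rw [← mul_pow]; simp
    linear_combination (-1 : ℤ) ^ (k + 1) * hd' + e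
  · have h1 := GenContFract.abs_sub_convs_le (v := ρ) (n := k) (of_not_terminatedAt hρ k)
    rw [GenContFract.conv_eq_num_div_den, hp, ← hq, ← hq] at h1
    have hk : (0 : ℝ) < q k := by exact_mod_cast hpos k
    have hk1 : (q k : ℝ) ≤ q (k + 1) := by
      rw [hq, hq]; exact GenContFract.of_den_mono
    have e : (q k : ℝ) * ρ - p k = q k * (ρ - p k / q k) := by field_simp
    rw [e, abs_mul, abs_of_pos hk]
    calc (q k : ℝ) * |ρ - p k / q k| ≤ q k * (1 / (q k * q (k + 1))) := by gcongr
      _ = 1 / q (k + 1) := by field_simp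
      _ ≤ 1 / q k := by gcongr

lemma tendsto_dens (hρ : Irrational ρ) {q : ℕ → ℕ}
    (hq : ∀ k, (q k : ℝ) = (GenContFract.of ρ).dens k) : Tendsto q atTop atTop := by
  refine tendsto_atTop_mono' (f₁ := fun k => Nat.fib (k + 1)) atTop
    (Eventually.of_forall fun k => ?_) ?_
  · have h1 := GenContFract.succ_nth_fib_le_of_nth_den (v := ρ) (n := k)
      (Or.inr (of_not_terminatedAt hρ _))
    rw [← hq] at h1
    exact_mod_cast h1
  · refine (tendsto_add_atTop_iff_nat 1).1 ?_
    exact (Nat.fib_add_two_strictMono).tendsto_atTop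

end Convergents

/-! ### The hypotheses for a circle diffeomorphism -/

/-- The variation of a periodic function of bounded variation is controlled by a monotone function
which increases by a constant over each period. -/
lemma exists_monoDeg_of_boundedVariationOn {φ : ℝ → ℝ} (hφ : Function.Periodic φ 1)
    (hbv : BoundedVariationOn φ (Icc 0 1)) :
    ∃ g V, MonoDeg g V ∧ ∀ a b, a ≤ b → |φ b - φ a| ≤ g b - g a := by
  let v : ℝ → ℝ := fun t => (eVariationOn φ (Icc 0 1 ∩ Icc 0 t)).toReal
  have hbv' : ∀ s t, BoundedVariationOn φ (Icc 0 1 ∩ Icc s t) := fun s t =>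
    hbv.mono inter_subset_left
  have hv : ∀ a b, 0 ≤ a → a ≤ b → b ≤ 1 → |φ b - φ a| ≤ v b - v a := by
    intro a b ha hab hb
    have e := eVariationOn.Icc_add_Icc φ (s := Icc 0 1) ha hab ⟨ha, hab.trans hb⟩
    have h1 := (hbv' a b).dist_le (x := b) (y := a) ⟨⟨ha.trans hab, hb⟩, hab, le_rfl⟩
      ⟨⟨ha, hab.trans hb⟩, le_rfl, hab⟩
    have e' := congrArg ENNReal.toReal e
    rw [ENNReal.toReal_add (hbv' _ _) (hbv' _ _)] at e'
    simp only [v]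
    rw [Real.dist_eq] at h1
    linarith
  have hv0 : v 0 = 0 := by
    simp only [v, Icc_self]
    rw [eVariationOn.subsingleton φ (subsingleton_singleton.anti inter_subset_right)]
    rfl
  have hint : ∀ n : ℤ, φ n = φ 0 := fun n => by
    have := add_int_of_add_one (g := φ) (V := 0) (by simpa using hφ) 0 n
    simpa using this
  have hfr : ∀ x, φ x = φ (Int.fract x) := fun x => by
    have := add_int_of_add_one (g := φ) (V := 0) (by simpa using hφ) (Int.fract x) ⌊x⌋
    rw [Int.fract_add_floor] at this
    simpa using this
  have hφ1 : φ 1 = φ 0 := by simpa using hφ 0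
  let g : ℝ → ℝ := fun x => ⌊x⌋ * v 1 + v (Int.fract x)
  have key : ∀ a b, a ≤ b → |φ b - φ a| ≤ g b - g a := by
    intro a b hab
    simp only [g]
    rw [hfr a, hfr b]
    have a0 := Int.fract_nonneg a
    have a1 := (Int.fract_lt_one a).le
    have b0 := Int.fract_nonneg b
    have b1 := (Int.fract_lt_one b).le
    rcases (Int.floor_mono hab).eq_or_lt with h | h
    · have : Int.fract a ≤ Int.fract b := by
        rw [Int.fract, Int.fract, h]; linarith
      rw [h]
      linarith [hv _ _ a0 this b1]
    · have h1 := abs_le.1 (hv _ _ le_rfl b0 b1)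
      have h2 := abs_le.1 (hv _ _ a0 a1 le_rfl)
      have h3 : (⌊a⌋ : ℝ) + 1 ≤ ⌊b⌋ := by exact_mod_cast h
      have h4 := (abs_nonneg _).trans (hv 0 1 le_rfl zero_le_one le_rfl)
      rw [hφ1] at h2
      rw [hv0] at h1 h4
      have h5 := mul_le_mul_of_nonneg_right h3 (by linarith : 0 ≤ v 1)
      rw [abs_le]
      constructor <;> linarith
  refine ⟨g, v 1, ⟨fun a b hab => ?_, fun x => ?_⟩, key⟩
  · exact sub_nonneg.1 ((abs_nonneg _).trans (key a b hab))
  · simp only [g, Int.floor_add_one, Int.fract_add_one]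
    push_cast; ring

/-- The lift of a `C^{1+bv}` diffeomorphism of irrational rotation number satisfies `IsDenjoy`. -/
lemma exists_isDenjoy (f : C1Diffeo) (hbv : BoundedVariationOn (deriv f.F) (Icc 0 1))
    {ρ : ℝ} (hρ : Irrational ρ) (hrot : f.rot = ρ) {q : ℕ → ℕ}
    (hq : ∀ k, (q k : ℝ) = (GenContFract.of ρ).dens k) :
    ∃ H g V p, IsDenjoy f.F H g ρ V q p := by
  have hbij : Bijective f.deg1 := ⟨f.left_inv.injective, f.right_inv.surjective⟩
  have htr : Bijective (CircleDeg1Lift.translate (Multiplicative.ofAdd ρ)) := by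
    refine ⟨fun a b h => ?_, fun y => ⟨y - ρ, ?_⟩⟩
    · simpa [CircleDeg1Lift.translate_apply] using h
    · simp [CircleDeg1Lift.translate_apply]
  obtain ⟨H, hH⟩ := CircleDeg1Lift.semiconj_of_bijective_of_translationNumber_eq hbij htr
    (by rw [CircleDeg1Lift.translationNumber_translate]; exact hrot)
  obtain ⟨p, hp⟩ := exists_isApprox hρ hq
  have hper : Function.Periodic (deriv f.F) 1 := periodic_deriv_of_shift f.map_add_one
  obtain ⟨g, V, hg, hgv⟩ := exists_monoDeg_of_boundedVariationOn hper hbv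
  have hcont : Continuous (deriv f.F) := f.contDiff.continuous_deriv le_rfl
  obtain ⟨x₀, -, hx₀⟩ := isCompact_Icc.exists_isMinOn (nonempty_Icc.2 (zero_le_one' ℝ))
    hcont.continuousOn
  have hmin : ∀ x, deriv f.F x₀ ≤ deriv f.F x := by
    intro x
    have e := add_int_of_add_one (g := deriv f.F) (V := 0) (by simpa using hper) x (-⌊x⌋)
    have a1 := Int.floor_le x
    have a2 := Int.lt_floor_add_one x
    have := hx₀ (show x + ((-⌊x⌋ : ℤ) : ℝ) ∈ Icc (0 : ℝ) 1 by
      push_cast; exact ⟨by linarith, by linarith⟩)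
    simp only [mem_ofPred_eq] at this
    rw [e] at this
    linarith
  set c := deriv f.F x₀ with hc
  have hc0 : 0 < c := f.deriv_pos x₀
  -- the logarithm is Lipschitz on `[c, ∞)` with constant `c⁻¹`
  have hlog : ∀ s t, c ≤ s → c ≤ t → Real.log t - Real.log s ≤ c⁻¹ * |t - s| := by
    intro s t hs ht
    have hs0 := hc0.trans_le hs
    have ht0 := hc0.trans_le ht
    rw [← Real.log_div ht0.ne' hs0.ne']
    calc Real.log (t / s) ≤ t / s - 1 := Real.log_le_sub_one_of_pos (by positivity)
      _ = s⁻¹ * (t - s) := by field_simp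
      _ ≤ s⁻¹ * |t - s| := by gcongr; exact le_abs_self _
      _ ≤ c⁻¹ * |t - s| := by gcongr
  refine ⟨H, fun x => c⁻¹ * g x, c⁻¹ * V, p,
    { F_mono := strictMono_of_deriv_pos f.deriv_pos
      F_cont := f.contDiff.continuous
      F_add := f.map_add_one
      H_deg := ⟨H.monotone, H.map_add_one⟩
      semi := fun x => ?_
      irr := hρ
      F_diff := f.contDiff
      F_pos := f.deriv_pos
      g_deg := ⟨fun a b hab => by
        have := hg.mono hab
        show c⁻¹ * g a ≤ c⁻¹ * g b
        gcongr, fun x => by simp only [hg.add_one]; ring⟩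
      var_le := fun a b hab => ?_
      approx := hp
      lim := tendsto_dens hρ hq }⟩
  · rw [add_comm, ← CircleDeg1Lift.translate_apply]; exact hH x
  · have h0 := mul_le_mul_of_nonneg_left (hgv a b hab) (inv_pos.2 hc0).le
    have h1 := hlog _ _ (hmin a) (hmin b)
    have h2 := hlog _ _ (hmin b) (hmin a)
    rw [abs_sub_comm] at h2
    simp only [logD]
    rw [abs_le, ← mul_sub]
    constructor <;> linarith

/-! ### Descent to the circle -/

lemma continuous_of_lft {u : 𝕊 → ℝ} (h : Continuous (lft u)) : Continuous u :=
  (QuotientAddGroup.isQuotientMap_mk _).continuous_iff.2 h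

lemma toCircle_iterate (f : C1Diffeo) (n : ℕ) (x : ℝ) :
    f.toCircle^[n] (x : 𝕊) = ((f.F^[n] x : ℝ) : 𝕊) := by
  induction n with
  | zero => rfl
  | succ n ih => rw [iterate_succ_apply', iterate_succ_apply', ih]; rfl

theorem denjoy_koksma_improved
    (f : C1Diffeo) (hbv : BoundedVariationOn (deriv f.F) (Set.Icc 0 1))
    (ρ : ℝ) (hρ : Irrational ρ) (hrot : f.rot = ρ)
    (q : ℕ → ℕ) (hq : ∀ k, (q k : ℝ) = (GenContFract.of ρ).dens k)
    (μ : Measure 𝕊) [IsProbabilityMeasure μ] (hinv : MeasurePreserving f.toCircle μ μ)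
    (u : 𝕊 → ℝ) (hu : IsC1 u) :
    TendstoUniformly
      (fun k x => (∑ i ∈ Finset.range (q k), u (f.toCircle^[i] x)) - (q k : ℝ) * ∫ y, u y ∂μ)
      (fun _ => 0) atTop := by
  obtain ⟨H, g, V, p, h⟩ := exists_isDenjoy f hbv hρ hrot hq
  have hcont : Continuous u := continuous_of_lft hu.continuous
  have hint : ∀ i, Integrable (fun y => u (f.toCircle^[i] y)) μ := fun i =>
    (hinv.iterate i).integrable_comp_of_integrable
      (hcont.integrable_of_hasCompactSupport (HasCompactSupport.of_compactSpace u))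
  have hval : ∀ i, ∫ y, u (f.toCircle^[i] y) ∂μ = ∫ y, u y ∂μ := fun i => by
    rw [← integral_map (hinv.iterate i).aemeasurable hcont.aestronglyMeasurable,
      (hinv.iterate i).map_eq]
  rw [Metric.tendstoUniformly_iff]
  intro ε hε
  filter_upwards [h.asympOsc_zero hu (lft_periodic u) (ε / 2) (half_pos hε)] with k hk x
  have hosc : ∀ y : 𝕊, |(∑ i ∈ Finset.range (q k), u (f.toCircle^[i] x))
      - ∑ i ∈ Finset.range (q k), u (f.toCircle^[i] y)| ≤ ε / 2 := by
    intro y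
    obtain ⟨a, rfl⟩ := QuotientAddGroup.mk_surjective x
    obtain ⟨b, rfl⟩ := QuotientAddGroup.mk_surjective y
    have := hk a b
    rw [zero_add] at this
    convert this using 3 <;>
    · refine Finset.sum_congr rfl fun i _ => ?_
      exact congrArg u (toCircle_iterate f i _)
  set S := ∑ i ∈ Finset.range (q k), u (f.toCircle^[i] x) with hS
  -- the error is the mean over `y` of the difference between the Birkhoff sums at `x` and at `y`
  have e : S - q k * ∫ y, u y ∂μ
      = ∫ y, (S - ∑ i ∈ Finset.range (q k), u (f.toCircle^[i] y)) ∂μ := by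
    rw [integral_sub (integrable_const _) (integrable_finsetSum _ fun i _ => hint i),
      integral_finsetSum _ fun i _ => hint i]
    simp [hval]
  rw [e, dist_comm, Real.dist_eq, sub_zero, ← Real.norm_eq_abs]
  refine (norm_integral_le_of_norm_le_const (C := ε / 2)
    (Eventually.of_forall fun y => hosc y)).trans_lt ?_
  simp [hε]
end
end
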